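/- arXiv:2001.01657 — 2 statements merged into one kernel-verified Lean document; each statement's English description precedes it below -/
import Mathlib

section
/- If f : Ω₁ → Ω₂ is a homeomorphism between open subsets of ℝⁿ belonging to W^{1,1}_loc(Ω₁, ℝⁿ), then the condition |Df|(f⁻¹(A)) ≤ K·Lⁿ(A) for all Borel sets A ⊆ Ω₂ is equivalent to the pointwise inequality |Df(x)| ≤ K·|J_f(x)| for Lⁿ-a.e. x ∈ Ω₁. -/
open MeasureTheory Metric Set Filter
open scoped ENNReal Topology NNReal

noncomputable section

/-- `ℝⁿ` as a Euclidean space. -/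
abbrev En (n : ℕ) : Type := EuclideanSpace ℝ (Fin n)

/-- A smooth test function compactly supported inside the set `Ω`. -/
def SmoothTest {n : ℕ} (Ω : Set (En n)) (φ : En n → ℝ) : Prop :=
  ContDiff ℝ (⊤ : ℕ∞) φ ∧ HasCompactSupport φ ∧ tsupport φ ⊆ Ω

/-- Frobenius norm of an `m × n` array of reals. -/
def frobNorm {m n : ℕ} (M : Fin m → Fin n → ℝ) : ℝ :=
  Real.sqrt (∑ j, ∑ i, M j i ^ 2)

/-- `Df = σ ⬝ ν` is the polar decomposition of the distributional derivative of the
mapping `f : Ω → ℝᵐ`: `σ` is a matrix field of unit Frobenius norm `ν`-a.e., `ν` is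
carried by `Ω`, and the integration-by-parts formula holds against all smooth test
functions compactly supported in `Ω`.  In particular `ν = |Df|` is the total variation
measure of `Df` on `Ω`. -/
def IsVariationMeasure {n m : ℕ} (Ω : Set (En n)) (f : En n → En m)
    (σ : En n → Fin m → Fin n → ℝ) (ν : Measure (En n)) : Prop :=
  Measurable σ ∧ (∀ᵐ x ∂ν, frobNorm (σ x) = 1) ∧ ν Ωᶜ = 0 ∧
    ∀ φ : En n → ℝ, SmoothTest Ω φ → ∀ (j : Fin m) (i : Fin n),
      ∫ x in Ω, f x j * fderiv ℝ φ x (EuclideanSpace.single i 1) ∂volume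
        = - ∫ x, φ x * σ x j i ∂ν

/-- `f ∈ BV(Ω, ℝᵐ)` with total variation measure `ν`. -/
def MemBV {n m : ℕ} (Ω : Set (En n)) (f : En n → En m) (ν : Measure (En n)) : Prop :=
  IntegrableOn f Ω volume ∧ ν Ω < ⊤ ∧ ∃ σ, IsVariationMeasure Ω f σ ν

/-- `f ∈ BV_loc(Ω, ℝᵐ)` with total variation measure `ν`, finite on compact subsets of `Ω`. -/
def MemBVloc {n m : ℕ} (Ω : Set (En n)) (f : En n → En m) (ν : Measure (En n)) : Prop :=
  LocallyIntegrableOn f Ω volume ∧ (∀ C : Set (En n), IsCompact C → C ⊆ Ω → ν C < ⊤) ∧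
    ∃ σ, IsVariationMeasure Ω f σ ν

/-- Scalar version of `IsVariationMeasure`: `Du = σ ⬝ ν` with `|σ| = 1` `ν`-a.e. -/
def IsVariationMeasureS {n : ℕ} (Ω : Set (En n)) (u : En n → ℝ)
    (σ : En n → Fin n → ℝ) (ν : Measure (En n)) : Prop :=
  Measurable σ ∧ (∀ᵐ x ∂ν, Real.sqrt (∑ i, σ x i ^ 2) = 1) ∧ ν Ωᶜ = 0 ∧
    ∀ φ : En n → ℝ, SmoothTest Ω φ → ∀ i : Fin n,
      ∫ x in Ω, u x * fderiv ℝ φ x (EuclideanSpace.single i 1) ∂volume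
        = - ∫ x, φ x * σ x i ∂ν

/-- `u ∈ BV(Ω)` with total variation measure `ν`. -/
def MemBVs {n : ℕ} (Ω : Set (En n)) (u : En n → ℝ) (ν : Measure (En n)) : Prop :=
  IntegrableOn u Ω volume ∧ ν Ω < ⊤ ∧ ∃ σ, IsVariationMeasureS Ω u σ ν

/-- `u ∈ BV_loc(Ω)` with total variation measure `ν`. -/
def MemBVlocs {n : ℕ} (Ω : Set (En n)) (u : En n → ℝ) (ν : Measure (En n)) : Prop :=
  LocallyIntegrableOn u Ω volume ∧ (∀ C : Set (En n), IsCompact C → C ⊆ Ω → ν C < ⊤) ∧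
    ∃ σ, IsVariationMeasureS Ω u σ ν

/-- `z` is the approximate limit of `f` at `x`. -/
def ApproxLimAt {n m : ℕ} (f : En n → En m) (x : En n) (z : En m) : Prop :=
  Tendsto (fun r : ℝ =>
      (∫ y in Metric.ball x r, ‖f y - z‖ ∂volume) / (volume (Metric.ball x r)).toReal)
    (nhdsWithin 0 (Set.Ioi 0)) (nhds 0)

/-- `f̃⁻¹(A)`: the preimage of `A` under the precise representative (approximate limit)
of `f`; a point belongs to it iff the approximate limit of `f` exists there and lies in `A`. -/
def tildePreimage {n m : ℕ} (f : En n → En m) (A : Set (En m)) : Set (En n) :=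
  {x | ∃ z ∈ A, ApproxLimAt f x z}

/-- `f` has no jump part: its variation measure does not charge the approximate
discontinuity set of `f`. -/
def NoJumpPart {n m : ℕ} (f : En n → En m) (ν : Measure (En n)) : Prop :=
  ν {x | ¬ ∃ z, ApproxLimAt f x z} = 0

/-- `f` is a homeomorphism of `Ω₁` onto `Ω₂`, with inverse `g`. -/
def IsHomeoOn {n : ℕ} (f g : En n → En n) (Ω₁ Ω₂ : Set (En n)) : Prop :=
  ContinuousOn f Ω₁ ∧ ContinuousOn g Ω₂ ∧ MapsTo f Ω₁ Ω₂ ∧ MapsTo g Ω₂ Ω₁ ∧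
    (∀ x ∈ Ω₁, g (f x) = x) ∧ (∀ y ∈ Ω₂, f (g y) = y)

/-- `Df` is the (matrix of the) distributional derivative of `f` on `Ω`, given by a
locally integrable function: the weak-derivative integration-by-parts identity. -/
def IsWeakDerivOn {n : ℕ} (Ω : Set (En n)) (f : En n → En n)
    (Df : En n → Fin n → Fin n → ℝ) : Prop :=
  ∀ φ : En n → ℝ, SmoothTest Ω φ → ∀ (j i : Fin n),
    ∫ x in Ω, f x j * fderiv ℝ φ x (EuclideanSpace.single i 1) ∂volume
      = - ∫ x in Ω, φ x * Df x j i ∂volume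

/-!
Write `Mₓ` for the maximal averages of `‖Df - Df(x)‖` over small balls about `x`. A pointwise
Poincaré (Hajłasz) inequality, applied to `z ↦ f(z) - Df(x) z`, bounds
`|f(y) - f(x) - Df(x)(y - x)|` by `C |y - x| (Mₓ + M_y)`. By Lebesgue differentiation and Egorov's
theorem, almost all of `Ω₁` is covered by countably many sets on each of which these averages tend
to `0` uniformly; there `f` is differentiable *within* the set, with derivative `Df`, although `f`
need not be differentiable at any point of `Ω₁`. Differentiability within sets suffices for the
area formula `Lⁿ(f(S)) = ∫_S |J_f|` for `S` inside the union of these sets, and taking `S = f⁻¹(A)`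
turns the measure bound into `∫_S |Df| ≤ ∫_S K |J_f|` for all such `S`.
-/

open Module (finrank)
open ContinuousLinearMap (lsmul)
open scoped Convolution

section Averages

lemma setLAverage_le_mul_of_subset {α : Type*} [MeasurableSpace α] {μ : Measure α} {s t : Set α}
    (hst : s ⊆ t) (ht : μ t ≠ ∞) {C : ℝ≥0∞} (hC : μ t ≤ C * μ s) (h : α → ℝ≥0∞) :
    ⨍⁻ x in s, h x ∂μ ≤ C * ⨍⁻ x in t, h x ∂μ := by
  rw [setLAverage_eq]
  refine ENNReal.div_le_of_le_mul ?_
  calc ∫⁻ x in s, h x ∂μ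
      ≤ ∫⁻ x in t, h x ∂μ := lintegral_mono_set hst
    _ = μ t * ⨍⁻ x in t, h x ∂μ := (measure_mul_setLAverage h ht).symm
    _ ≤ C * μ s * ⨍⁻ x in t, h x ∂μ := by gcongr
    _ = C * (⨍⁻ x in t, h x ∂μ) * μ s := by ring

lemma homothety_preimage_ball {E : Type*} [NormedAddCommGroup E] [NormedSpace ℝ E] (x : E)
    {t : ℝ} (ht : 0 < t) (r : ℝ) :
    AffineMap.homothety x t ⁻¹' ball x (t * r) = ball x r := by
  ext z
  rw [mem_preimage, mem_ball, mem_ball, dist_homothety_center, Real.norm_of_nonneg ht.le,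
    dist_comm, mul_lt_mul_iff_right₀ ht]

variable {E : Type*} [NormedAddCommGroup E] [NormedSpace ℝ E] [FiniteDimensional ℝ E]
  [MeasurableSpace E] [BorelSpace E] (μ : Measure E) [μ.IsAddHaarMeasure]

lemma addHaar_ball_two_mul (x y : E) (r : ℝ) :
    μ (ball x (2 * r)) = 2 ^ finrank ℝ E * μ (ball y r) := by
  rw [Measure.addHaar_ball_mul_of_pos μ x two_pos, Measure.addHaar_ball_center μ y,
    ENNReal.ofReal_pow zero_le_two, ENNReal.ofReal_ofNat]

lemma setLAverage_ball_le_of_subset {x y : E} {r R : ℝ} (hsub : ball y r ⊆ ball x R)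
    (hR : R ≤ 2 * r) (h : E → ℝ≥0∞) :
    ⨍⁻ z in ball y r, h z ∂μ ≤ 2 ^ finrank ℝ E * ⨍⁻ z in ball x R, h z ∂μ := by
  refine setLAverage_le_mul_of_subset hsub measure_ball_lt_top.ne ?_ h
  rw [← addHaar_ball_two_mul μ x]
  exact measure_mono (ball_subset_ball hR)

lemma map_addHaar_homothety (x : E) {t : ℝ} (ht : t ≠ 0) :
    μ.map (AffineMap.homothety x t) = ENNReal.ofReal |(t ^ finrank ℝ E)⁻¹| • μ := by
  have hcomp : ⇑(AffineMap.homothety x t) = (· + x) ∘ (t • ·) ∘ (· - x) := by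
    ext z
    simp only [AffineMap.homothety_apply, vsub_eq_sub, vadd_eq_add, Function.comp_apply]
  rw [hcomp, ← Measure.map_map (by fun_prop) (by fun_prop),
    ← Measure.map_map (by fun_prop) (by fun_prop), map_sub_right_eq_self,
    Measure.map_addHaar_smul μ ht, Measure.map_smul, map_add_right_eq_self]

lemma setLAverage_ball_homothety (x : E) {t : ℝ} (ht : 0 < t) (r : ℝ) (h : E → ℝ≥0∞) :
    ⨍⁻ z in ball x r, h (AffineMap.homothety x t z) ∂μ = ⨍⁻ y in ball x (t * r), h y ∂μ := by
  have hemb : MeasurableEmbedding (AffineMap.homothety x t) :=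
    (Topology.IsOpenEmbedding.of_continuous_injective_isOpenMap
      (AffineMap.homothety_continuous x t)
      (fun y z hyz => by simpa [AffineMap.homothety_apply, ht.ne'] using hyz)
      (AffineMap.homothety_isOpenMap x t ht.ne')).measurableEmbedding
  set c := ENNReal.ofReal |(t ^ finrank ℝ E)⁻¹| with hc
  have hc0 : c ≠ 0 := by simp [hc, ht.ne']
  have hmap : (μ.restrict (ball x r)).map (AffineMap.homothety x t)
      = c • μ.restrict (ball x (t * r)) := by
    rw [← homothety_preimage_ball x ht r, ← Measure.restrict_map hemb.measurable measurableSet_ball,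
      map_addHaar_homothety μ x ht.ne', Measure.restrict_smul]
  have hball : μ (ball x r) = c * μ (ball x (t * r)) := by
    simpa [hemb.map_apply] using congrArg (· univ) hmap
  rw [setLAverage_eq, setLAverage_eq, ← hemb.lintegral_map, hmap, lintegral_smul_measure, hball,
    smul_eq_mul, ENNReal.mul_div_mul_left _ _ hc0 ENNReal.ofReal_ne_top]

lemma enorm_sub_le_setLAverage_add {F : Type*} [NormedAddCommGroup F] {g : E → F}
    {x y : E} {r : ℝ} (hr : 0 < r) (hxy : dist x y ≤ r)
    (hg : AEStronglyMeasurable g (μ.restrict (ball x r))) (a b : F) :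
    ‖a - b‖ₑ ≤ 2 ^ finrank ℝ E *
      (⨍⁻ z in ball x r, ‖g z - a‖ₑ ∂μ + ⨍⁻ z in ball y r, ‖g z - b‖ₑ ∂μ) := by
  set m := midpoint ℝ x y
  have hx : ball m (r / 2) ⊆ ball x r := ball_subset_ball' (by
    rw [dist_midpoint_left, Real.norm_ofNat]; linarith)
  have hy : ball m (r / 2) ⊆ ball y r := ball_subset_ball' (by
    rw [dist_midpoint_right, Real.norm_ofNat]; linarith)
  calc ‖a - b‖ₑ = ⨍⁻ _ in ball m (r / 2), ‖a - b‖ₑ ∂μ :=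
        (setLAverage_const (measure_ball_pos μ m (half_pos hr)).ne' measure_ball_lt_top.ne _).symm
    _ ≤ ⨍⁻ z in ball m (r / 2), (‖g z - a‖ₑ + ‖g z - b‖ₑ) ∂μ :=
        laverage_mono_ae (.of_forall fun z => by
          simpa only [edist_eq_enorm_sub] using edist_triangle_left a b (g z))
    _ = ⨍⁻ z in ball m (r / 2), ‖g z - a‖ₑ ∂μ + ⨍⁻ z in ball m (r / 2), ‖g z - b‖ₑ ∂μ :=
        lintegral_add_left'
          (((hg.mono_set hx).sub aestronglyMeasurable_const).enorm.smul_measure _) _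
    _ ≤ 2 ^ finrank ℝ E * ⨍⁻ z in ball x r, ‖g z - a‖ₑ ∂μ
          + 2 ^ finrank ℝ E * ⨍⁻ z in ball y r, ‖g z - b‖ₑ ∂μ :=
        add_le_add (setLAverage_ball_le_of_subset μ hx (by linarith) _)
          (setLAverage_ball_le_of_subset μ hy (by linarith) _)
    _ = _ := (mul_add _ _ _).symm

end Averages

section Smooth

variable {E F : Type*} [NormedAddCommGroup E] [NormedSpace ℝ E]
  [NormedAddCommGroup F] [NormedSpace ℝ F]

lemma enorm_sub_homothety_le_lintegral [CompleteSpace F] {v : E → F} (hv : ContDiff ℝ 1 v)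
    {x z : E} {δ r : ℝ} (hδ1 : δ ≤ 1) (hz : dist z x ≤ r) :
    ‖v z - v (AffineMap.homothety x δ z)‖ₑ
      ≤ ∫⁻ t in Ioc δ 1, ENNReal.ofReal r * ‖fderiv ℝ v (AffineMap.homothety x t z)‖ₑ := by
  simp only [AffineMap.homothety_apply, vsub_eq_sub, vadd_eq_add]
  have hderiv : ∀ t ∈ uIcc δ 1, HasDerivAt (fun t : ℝ => v (t • (z - x) + x))
      (fderiv ℝ v (t • (z - x) + x) (z - x)) t := fun t _ => by
    have hline : HasDerivAt (fun t : ℝ => t • (z - x) + x) (z - x) t := by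
      simpa using ((hasDerivAt_id t).smul_const (z - x)).add_const x
    exact (hv.differentiable one_ne_zero _).hasFDerivAt.comp_hasDerivAt t hline
  have hcont : Continuous (fun t : ℝ => fderiv ℝ v (t • (z - x) + x) (z - x)) :=
    ((hv.continuous_fderiv one_ne_zero).comp (by fun_prop)).clm_apply continuous_const
  have hftc := intervalIntegral.integral_eq_sub_of_hasDerivAt hderiv
    (hcont.intervalIntegrable _ _)
  rw [one_smul, sub_add_cancel] at hftc
  rw [← hftc, intervalIntegral.integral_of_le hδ1]
  refine (enorm_integral_le_lintegral_enorm _).trans (lintegral_mono fun t => ?_)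
  rw [mul_comm]
  refine (ContinuousLinearMap.le_opENorm _ _).trans ?_
  gcongr
  rw [← edist_eq_enorm_sub, edist_dist]
  exact ENNReal.ofReal_le_ofReal hz

variable [FiniteDimensional ℝ E] [MeasurableSpace E] [BorelSpace E]
  (μ : Measure E) [μ.IsAddHaarMeasure]

lemma setLAverage_enorm_sub_homothety_le [CompleteSpace F] {v : E → F} (hv : ContDiff ℝ 1 v)
    (x : E) {r δ : ℝ} (hr : 0 ≤ r) (hδ : 0 < δ) (hδ1 : δ ≤ 1) {c : ℝ≥0∞}
    (hc : ∀ s ∈ Icc (δ * r) r, ⨍⁻ y in ball x s, ‖fderiv ℝ v y‖ₑ ∂μ ≤ c) :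
    ⨍⁻ z in ball x r, ‖v z - v (AffineMap.homothety x δ z)‖ₑ ∂μ ≤ ENNReal.ofReal r * c := by
  have hmeas : Measurable (Function.uncurry fun (z : E) (t : ℝ) =>
      ENNReal.ofReal r * ‖fderiv ℝ v (AffineMap.homothety x t z)‖ₑ) := by
    simp only [Function.uncurry_def, AffineMap.homothety_apply, vsub_eq_sub, vadd_eq_add]
    exact ((hv.continuous_fderiv one_ne_zero).comp (by fun_prop)).enorm.measurable.const_mul _
  calc ⨍⁻ z in ball x r, ‖v z - v (AffineMap.homothety x δ z)‖ₑ ∂μ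
      ≤ ⨍⁻ z in ball x r, (∫⁻ t in Ioc δ 1,
          ENNReal.ofReal r * ‖fderiv ℝ v (AffineMap.homothety x t z)‖ₑ) ∂μ :=
        laverage_mono_ae <| ae_restrict_of_forall_mem measurableSet_ball fun z hz =>
          enorm_sub_homothety_le_lintegral hv hδ1 (mem_ball.1 hz).le
    _ = ∫⁻ t in Ioc δ 1, (⨍⁻ z in ball x r,
          ENNReal.ofReal r * ‖fderiv ℝ v (AffineMap.homothety x t z)‖ₑ ∂μ) :=
        lintegral_lintegral_swap hmeas.aemeasurable
    _ ≤ ∫⁻ _ in Ioc δ 1, ENNReal.ofReal r * c := by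
        refine setLIntegral_mono' measurableSet_Ioc fun t ht => ?_
        rw [laverage, lintegral_const_mul' _ _ ENNReal.ofReal_ne_top, ← laverage,
          setLAverage_ball_homothety μ x (hδ.trans ht.1) r (fun y => ‖fderiv ℝ v y‖ₑ)]
        gcongr
        exact hc _ ⟨by gcongr; exact ht.1.le, mul_le_of_le_one_left hr ht.2⟩
    _ ≤ ENNReal.ofReal r * c := by
        rw [setLIntegral_const, Real.volume_Ioc]
        exact mul_le_of_le_one_right' (ENNReal.ofReal_le_one.2 (by linarith))

lemma setLIntegral_enorm_convolution_le {φ : E → ℝ} {ρ : ℝ} (hφ : Continuous φ)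
    (hsupp : Function.support φ ⊆ ball 0 ρ) {G : E → F} (hG : AEStronglyMeasurable G μ)
    (x : E) (s : ℝ) :
    ∫⁻ y in ball x s, ‖(φ ⋆[lsmul ℝ ℝ, μ] G) y‖ₑ ∂μ
      ≤ (∫⁻ t, ‖φ t‖ₑ ∂μ) * ∫⁻ y in ball x (s + ρ), ‖G y‖ₑ ∂μ := by
  have hmeas : AEMeasurable (Function.uncurry fun y t => ‖φ t‖ₑ * ‖G (y - t)‖ₑ)
      ((μ.restrict (ball x s)).prod μ) := by
    have hGsub : AEStronglyMeasurable (fun p : E × E => G (p.1 - p.2)) (μ.prod μ) :=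
      hG.comp_quasiMeasurePreserving (quasiMeasurePreserving_sub μ μ)
    exact (hφ.comp continuous_snd).enorm.measurable.aemeasurable.mul
      (hGsub.mono_measure (Measure.prod_mono Measure.restrict_le_self le_rfl)).enorm
  have htranslate : ∀ t ∈ ball (0 : E) ρ,
      ∫⁻ y in ball x s, ‖G (y - t)‖ₑ ∂μ ≤ ∫⁻ y in ball x (s + ρ), ‖G y‖ₑ ∂μ := fun t ht => by
    rw [← lintegral_indicator measurableSet_ball, ← lintegral_indicator measurableSet_ball,
      ← lintegral_sub_right_eq_self ((ball x (s + ρ)).indicator fun y => ‖G y‖ₑ) t]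
    refine lintegral_mono fun y => indicator_apply_le' (fun hy => ?_) fun _ => zero_le
    have hmem : y - t ∈ ball x (s + ρ) := by
      simpa using mem_ball.2 ((dist_sub_sub_le y t x 0).trans_lt (add_lt_add hy ht))
    rw [indicator_of_mem hmem]
  calc ∫⁻ y in ball x s, ‖(φ ⋆[lsmul ℝ ℝ, μ] G) y‖ₑ ∂μ
      ≤ ∫⁻ y in ball x s, ∫⁻ t, ‖φ t‖ₑ * ‖G (y - t)‖ₑ ∂μ ∂μ := by
        refine lintegral_mono fun y => (enorm_integral_le_lintegral_enorm _).trans_eq ?_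
        simp only [ContinuousLinearMap.lsmul_apply, enorm_smul]
    _ = ∫⁻ t, ∫⁻ y in ball x s, ‖φ t‖ₑ * ‖G (y - t)‖ₑ ∂μ ∂μ := lintegral_lintegral_swap hmeas
    _ ≤ ∫⁻ t, ‖φ t‖ₑ * ∫⁻ y in ball x (s + ρ), ‖G y‖ₑ ∂μ ∂μ := by
        refine lintegral_mono fun t => ?_
        rw [lintegral_const_mul' _ _ enorm_ne_top]
        rcases eq_or_ne (φ t) 0 with h0 | h0
        · simp [h0]
        · exact mul_le_mul' le_rfl (htranslate t (hsupp h0))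
    _ = (∫⁻ t, ‖φ t‖ₑ ∂μ) * ∫⁻ y in ball x (s + ρ), ‖G y‖ₑ ∂μ :=
        lintegral_mul_const _ hφ.enorm.measurable

end Smooth

section WeakDerivative

lemma integrable_bilin_of_hasCompactSupport {X F G H : Type*} [TopologicalSpace X] [R1Space X]
    [MeasurableSpace X] [OpensMeasurableSpace X] {μ : Measure X} {Ω : Set X}
    [NormedAddCommGroup F] [NormedSpace ℝ F] [NormedAddCommGroup G] [NormedSpace ℝ G]
    [NormedAddCommGroup H] [NormedSpace ℝ H] (B : G →L[ℝ] F →L[ℝ] H) {c : X → G}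
    (hc : Continuous c) (hcomp : HasCompactSupport c) (hsub : tsupport c ⊆ Ω) {u : X → F}
    (hu : LocallyIntegrableOn u Ω μ) : Integrable (fun x => B (c x) (u x)) μ := by
  rw [← integrableOn_iff_integrable_of_support_subset (s := tsupport c) fun x hx =>
    subset_tsupport c fun h0 => hx (by simp [h0])]
  have hmem := hu.integrableOn_compact_subset hsub hcomp
  rw [IntegrableOn, ← memLp_one_iff_integrable] at hmem ⊢
  exact B.memLp_of_bilin 1 ((hc.memLp_top_of_hasCompactSupport hcomp μ).restrict _) hmem

variable {E F : Type*} [NormedAddCommGroup E] [NormedSpace ℝ E] [MeasurableSpace E]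
  [NormedAddCommGroup F] [NormedSpace ℝ F] {μ : Measure E} {Ω : Set E}

/-- `u'` is the weak Fréchet derivative of `u` on `Ω` with respect to the reference measure `μ`:
the integration by parts formula holds against every smooth test function compactly supported
in `Ω`. Testing all directions at once makes both sides continuous linear maps `E →L[ℝ] F`.
Local integrability of `u` and `u'` is not part of the definition. -/
def HasWeakFDerivOn (μ : Measure E) (Ω : Set E) (u : E → F) (u' : E → E →L[ℝ] F) : Prop :=
  ∀ φ : E → ℝ, ContDiff ℝ (⊤ : ℕ∞) φ → HasCompactSupport φ → tsupport φ ⊆ Ω →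
    ∫ x in Ω, (fderiv ℝ φ x).smulRight (u x) ∂μ = -∫ x in Ω, φ x • u' x ∂μ

lemma hasWeakFDerivOn_iff_integral {u : E → F} {u' : E → E →L[ℝ] F} :
    HasWeakFDerivOn μ Ω u u' ↔
      ∀ φ : E → ℝ, ContDiff ℝ (⊤ : ℕ∞) φ → HasCompactSupport φ → tsupport φ ⊆ Ω →
        ∫ x, (fderiv ℝ φ x).smulRight (u x) ∂μ = -∫ x, φ x • u' x ∂μ := by
  refine forall₄_congr fun φ _ _ hs => ?_
  rw [setIntegral_eq_integral_of_forall_compl_eq_zero fun x hx => ?_,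
    setIntegral_eq_integral_of_forall_compl_eq_zero fun x hx => ?_]
  · rw [image_eq_zero_of_notMem_tsupport fun h => hx (hs h), zero_smul]
  · rw [fderiv_of_notMem_tsupport ℝ fun h => hx (hs h), ContinuousLinearMap.zero_smulRight]

lemma HasWeakFDerivOn.congr_ae {u : E → F} {u' D : E → E →L[ℝ] F} (h : HasWeakFDerivOn μ Ω u u')
    (hD : u' =ᵐ[μ.restrict Ω] D) : HasWeakFDerivOn μ Ω u D := fun φ hφ hc hs => by
  rw [h φ hφ hc hs]
  congr 1
  refine integral_congr_ae ?_
  filter_upwards [hD] with x hx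
  rw [hx]

lemma HasWeakFDerivOn.sub [OpensMeasurableSpace E] {u v : E → F} {u' v' : E → E →L[ℝ] F}
    (hu : HasWeakFDerivOn μ Ω u u') (hv : HasWeakFDerivOn μ Ω v v')
    (hui : LocallyIntegrableOn u Ω μ) (hvi : LocallyIntegrableOn v Ω μ)
    (hui' : LocallyIntegrableOn u' Ω μ) (hvi' : LocallyIntegrableOn v' Ω μ) :
    HasWeakFDerivOn μ Ω (fun x => u x - v x) (fun x => u' x - v' x) := fun φ hφ hc hs => by
  have hleft : ∀ {w : E → F}, LocallyIntegrableOn w Ω μ →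
      Integrable (fun x => (fderiv ℝ φ x).smulRight (w x)) μ := fun hw =>
    integrable_bilin_of_hasCompactSupport (ContinuousLinearMap.smulRightL ℝ E F)
      (hφ.continuous_fderiv (by simp)) (hc.fderiv ℝ) ((tsupport_fderiv_subset ℝ).trans hs) hw
  have hright : ∀ {w : E → E →L[ℝ] F}, LocallyIntegrableOn w Ω μ →
      Integrable (fun x => φ x • w x) μ := fun hw =>
    integrable_bilin_of_hasCompactSupport (lsmul ℝ ℝ) hφ.continuous hc hs hw
  have hsplit : ∀ x, (fderiv ℝ φ x).smulRight (u x - v x)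
      = (fderiv ℝ φ x).smulRight (u x) - (fderiv ℝ φ x).smulRight (v x) := fun x =>
    map_sub (ContinuousLinearMap.smulRightL ℝ E F (fderiv ℝ φ x)) _ _
  simp only [hsplit, smul_sub]
  rw [integral_sub (hleft hui).integrableOn (hleft hvi).integrableOn,
    integral_sub (hright hui').integrableOn (hright hvi').integrableOn, hu φ hφ hc hs,
    hv φ hφ hc hs, neg_sub_neg, neg_sub]

variable [FiniteDimensional ℝ E] [BorelSpace E] [μ.IsAddHaarMeasure]

lemma hasWeakFDerivOn_continuousLinearMap (a : E →L[ℝ] F) :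
    HasWeakFDerivOn μ Ω a (fun _ => a) := hasWeakFDerivOn_iff_integral.2 fun φ hφ hc _ => by
  have hleft : Integrable (fun x => (fderiv ℝ φ x).smulRight (a x)) μ :=
    integrable_bilin_of_hasCompactSupport (Ω := univ) (ContinuousLinearMap.smulRightL ℝ E F)
      (hφ.continuous_fderiv (by simp)) (hc.fderiv ℝ) (subset_univ _)
      (a.continuous.locallyIntegrable.locallyIntegrableOn _)
  have hright : Integrable (fun x => φ x • a) μ :=
    (hφ.continuous.smul continuous_const).integrable_of_hasCompactSupport hc.smul_right
  ext v
  have hparts := integral_smul_fderiv_eq_neg_fderiv_smul_of_integrable (f := φ) (g := a)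
    (hleft.apply_continuousLinearMap v) (by simpa using hright.apply_continuousLinearMap v)
    ((hφ.continuous.smul a.continuous).integrable_of_hasCompactSupport hc.smul_right)
    (fun x _ => hφ.differentiable (by simp) x) (fun x _ => a.differentiableAt)
  simp only [ContinuousLinearMap.fderiv] at hparts
  rw [_root_.neg_apply, ContinuousLinearMap.integral_apply hleft,
    ContinuousLinearMap.integral_apply hright]
  simp only [ContinuousLinearMap.smulRight_apply, _root_.smul_apply, hparts, neg_neg]

lemma HasWeakFDerivOn.hasFDerivAt_convolution_indicator {u : E → F} {u' : E → E →L[ℝ] F}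
    (h : HasWeakFDerivOn μ Ω u u') {V : Set E} (hV : MeasurableSet V) (hVΩ : V ⊆ Ω)
    (hu : IntegrableOn u V μ) {φ : E → ℝ}
    (hφ : ContDiff ℝ (⊤ : ℕ∞) φ) (hc : HasCompactSupport φ) {y : E}
    (hy : ∀ z ∉ V, y - z ∉ tsupport φ) :
    HasFDerivAt (φ ⋆[lsmul ℝ ℝ, μ] V.indicator u)
      ((φ ⋆[lsmul ℝ ℝ, μ] V.indicator u') y) y := by
  set ψ : E → ℝ := fun z => φ (y - z)
  have hψsupp : tsupport ψ ⊆ V := fun z hz => by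
    by_contra hzV
    exact hy z hzV
      ((tsupport_comp_eq_preimage φ (Homeomorph.subLeft y)).subset hz)
  have hψ' : ∀ z, fderiv ℝ ψ z = -fderiv ℝ φ (y - z) := fun z => by
    have hcomp := ((hφ.differentiable (by simp) (y - z)).hasFDerivAt.comp z
      ((hasFDerivAt_id z).const_sub y)).fderiv
    rwa [ContinuousLinearMap.comp_neg, ContinuousLinearMap.comp_id] at hcomp
  have htest := hasWeakFDerivOn_iff_integral.1 h ψ (hφ.comp (contDiff_const.sub contDiff_id))
    (hc.comp_homeomorph (Homeomorph.subLeft y)) (hψsupp.trans hVΩ)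
  convert! hc.hasFDerivAt_convolution_left (lsmul ℝ ℝ) (hφ.of_le (by simp))
    (hu.integrable_indicator hV).locallyIntegrable y using 1
  rw [convolution_eq_swap, convolution_eq_swap]
  calc ∫ z, lsmul ℝ ℝ (φ (y - z)) (V.indicator u' z) ∂μ
      = ∫ z, ψ z • u' z ∂μ := by
        refine integral_congr_ae (.of_forall fun z => ?_)
        by_cases hz : z ∈ V
        · simp [hz, ψ]
        · simp [hz, image_eq_zero_of_notMem_tsupport fun h => hz (hψsupp h)]
    _ = ∫ z, -(fderiv ℝ ψ z).smulRight (u z) ∂μ := by rw [integral_neg, htest, neg_neg]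
    _ = ∫ z, (lsmul ℝ ℝ).precompL E (fderiv ℝ φ (y - z)) (V.indicator u z) ∂μ := by
        refine integral_congr_ae (.of_forall fun z => ?_)
        by_cases hz : z ∈ V
        · ext; simp [hz, hψ']
        · ext; simp [hz, fderiv_of_notMem_tsupport ℝ fun h => hz (hψsupp h)]

end WeakDerivative

section PoincareHajlasz

variable {E F : Type*} [NormedAddCommGroup E] [MeasurableSpace E] [NormedAddCommGroup F]

/-- The restricted centred Hardy–Littlewood maximal function of `h`: the supremum of the averages
of `‖h‖` over the balls centred at `x` of radius at most `R`. -/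
def localMaximal (μ : Measure E) (h : E → F) (R : ℝ) (x : E) : ℝ≥0∞ :=
  ⨆ s ∈ Ioc 0 R, ⨍⁻ z in ball x s, ‖h z‖ₑ ∂μ

variable {μ : Measure E}

lemma setLAverage_le_localMaximal (h : E → F) (x : E) {s R : ℝ} (hs : s ∈ Ioc 0 R) :
    ⨍⁻ z in ball x s, ‖h z‖ₑ ∂μ ≤ localMaximal μ h R x :=
  le_iSup₂ (f := fun s (_ : s ∈ Ioc 0 R) => ⨍⁻ z in ball x s, ‖h z‖ₑ ∂μ) s hs

variable [NormedSpace ℝ E] [FiniteDimensional ℝ E] [BorelSpace E] [μ.IsAddHaarMeasure]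
  [NormedSpace ℝ F] {Ω : Set E} {u : E → F} {u' : E → E →L[ℝ] F} {x : E} {r : ℝ}

lemma setLAverage_enorm_convolution_normed_le (φ : ContDiffBump (0 : E)) {G : E → F}
    (hG : AEStronglyMeasurable G μ) (x : E) {s : ℝ} (hs : φ.rOut ≤ s) :
    ⨍⁻ y in ball x s, ‖(φ.normed μ ⋆[lsmul ℝ ℝ, μ] G) y‖ₑ ∂μ
      ≤ 2 ^ finrank ℝ E * ⨍⁻ y in ball x (2 * s), ‖G y‖ₑ ∂μ := by
  have hmass : ∫⁻ t, ‖φ.normed μ t‖ₑ ∂μ = 1 := by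
    simp_rw [← ofReal_integral_norm_eq_lintegral_enorm φ.integrable_normed,
      Real.norm_of_nonneg (φ.nonneg_normed _), φ.integral_normed, ENNReal.ofReal_one]
  rw [setLAverage_eq]
  refine ENNReal.div_le_of_le_mul ?_
  calc ∫⁻ y in ball x s, ‖(φ.normed μ ⋆[lsmul ℝ ℝ, μ] G) y‖ₑ ∂μ
      ≤ (∫⁻ t, ‖φ.normed μ t‖ₑ ∂μ) * ∫⁻ y in ball x (s + φ.rOut), ‖G y‖ₑ ∂μ :=
        setLIntegral_enorm_convolution_le μ (φ.contDiff_normed (n := 0)).continuous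
          φ.support_normed_eq.subset hG x s
    _ ≤ ∫⁻ y in ball x (2 * s), ‖G y‖ₑ ∂μ := by
        rw [hmass, one_mul]
        exact lintegral_mono_set (ball_subset_ball (by linarith))
    _ = μ (ball x (2 * s)) * ⨍⁻ y in ball x (2 * s), ‖G y‖ₑ ∂μ :=
        (measure_mul_setLAverage _ measure_ball_lt_top.ne).symm
    _ = 2 ^ finrank ℝ E * (⨍⁻ y in ball x (2 * s), ‖G y‖ₑ ∂μ) * μ (ball x s) := by
        rw [addHaar_ball_two_mul μ x x]
        ring

variable [CompleteSpace F]

/-- Comparing `z` with its contraction towards `x` by the factor `δ`, not with `x` itself, only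
involves averages over balls whose radius is at least the mollification radius `δ * r`; these are
controlled by the averages of `u'`. -/
lemma HasWeakFDerivOn.setLAverage_enorm_mollified_sub_le (h : HasWeakFDerivOn μ Ω u u')
    (hsub : closedBall x (2 * r) ⊆ Ω) (hu : IntegrableOn u (closedBall x (2 * r)) μ)
    (hu' : IntegrableOn u' (closedBall x (2 * r)) μ) (hr : 0 < r)
    (φ : ContDiffBump (0 : E)) {δ : ℝ} (hδ1 : δ ≤ 1) (hφ : φ.rOut = δ * r)
    {v : E → F} (hv : v = φ.normed μ ⋆[lsmul ℝ ℝ, μ] (closedBall x (2 * r)).indicator u) :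
    ⨍⁻ z in ball x r, ‖v z - v (AffineMap.homothety x δ z)‖ₑ ∂μ
      ≤ ENNReal.ofReal r * (2 ^ finrank ℝ E * localMaximal μ u' (2 * r) x) := by
  have hδ : 0 < δ := pos_of_mul_pos_left (hφ ▸ φ.rOut_pos) hr.le
  set V := closedBall x (2 * r)
  have hV : MeasurableSet V := measurableSet_closedBall
  have hvc : ContDiff ℝ 1 v := hv ▸ φ.hasCompactSupport_normed.contDiff_convolution_left _
    φ.contDiff_normed (hu.integrable_indicator hV).locallyIntegrable
  have hderiv : ∀ y ∈ ball x r,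
      fderiv ℝ v y = (φ.normed μ ⋆[lsmul ℝ ℝ, μ] V.indicator u') y := fun y hy => by
    rw [hv]
    refine (h.hasFDerivAt_convolution_indicator hV hsub hu φ.contDiff_normed
      φ.hasCompactSupport_normed fun z hz hyz => hz ?_).fderiv
    rw [φ.tsupport_normed_eq, hφ, mem_closedBall_zero_iff, ← dist_eq_norm] at hyz
    rw [mem_closedBall]
    nlinarith [dist_triangle_left z x y, mem_ball.1 hy]
  refine setLAverage_enorm_sub_homothety_le μ hvc x hr.le hδ hδ1 fun s hs => ?_
  calc ⨍⁻ y in ball x s, ‖fderiv ℝ v y‖ₑ ∂μ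
      = ⨍⁻ y in ball x s, ‖(φ.normed μ ⋆[lsmul ℝ ℝ, μ] V.indicator u') y‖ₑ ∂μ :=
        setLAverage_congr_fun measurableSet_ball fun y hy => by
          rw [hderiv y (ball_subset_ball hs.2 hy)]
    _ ≤ 2 ^ finrank ℝ E * ⨍⁻ y in ball x (2 * s), ‖V.indicator u' y‖ₑ ∂μ :=
        setLAverage_enorm_convolution_normed_le φ
          (hu'.integrable_indicator hV).aestronglyMeasurable x (hφ ▸ hs.1)
    _ ≤ 2 ^ finrank ℝ E * ⨍⁻ y in ball x (2 * s), ‖u' y‖ₑ ∂μ := by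
        gcongr
        exact .of_forall fun y => enorm_indicator_le_enorm_self u' y
    _ ≤ 2 ^ finrank ℝ E * localMaximal μ u' (2 * r) x := by
        gcongr
        have hs0 : 0 < s := (mul_pos hδ hr).trans_le hs.1
        exact setLAverage_le_localMaximal u' x ⟨by positivity, by linarith [hs.2]⟩

lemma tendsto_convolution_normed_indicator {φ : ℕ → ContDiffBump (0 : E)}
    (hφ : Tendsto (fun k => (φ k).rOut) atTop (𝓝 0)) {V : Set E} (hV : MeasurableSet V)
    (hu : IntegrableOn u V μ) {z : E} (hVz : V ∈ 𝓝 z) (hz : ContinuousAt u z) {y : ℕ → E}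
    (hy : Tendsto y atTop (𝓝 z)) :
    Tendsto (fun k => ((φ k).normed μ ⋆[lsmul ℝ ℝ, μ] V.indicator u) (y k)) atTop (𝓝 (u z)) := by
  have hlim : Tendsto (V.indicator u) (𝓝 z) (𝓝 (u z)) :=
    Tendsto.congr' (eventually_of_mem hVz fun w hw => (indicator_of_mem hw u).symm) hz
  exact ContDiffBump.convolution_tendsto_right (g := fun _ => V.indicator u) hφ
    (.of_forall fun _ => (hu.integrable_indicator hV).aestronglyMeasurable)
    (hlim.comp tendsto_snd) hy

lemma HasWeakFDerivOn.setLAverage_enorm_sub_le (h : HasWeakFDerivOn μ Ω u u')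
    (hu : ContinuousOn u Ω) (hsub : closedBall x (2 * r) ⊆ Ω)
    (hu' : IntegrableOn u' (closedBall x (2 * r)) μ) (hr : 0 < r) :
    ⨍⁻ z in ball x r, ‖u z - u x‖ₑ ∂μ
      ≤ ENNReal.ofReal r * (2 ^ finrank ℝ E * localMaximal μ u' (2 * r) x) := by
  have hui : IntegrableOn u (closedBall x (2 * r)) μ :=
    (hu.mono hsub).integrableOn_compact (isCompact_closedBall _ _)
  set δ : ℕ → ℝ := fun k => 1 / ((k : ℝ) + 1)
  have hδpos : ∀ k, 0 < δ k := fun k => Nat.one_div_pos_of_nat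
  have hδ1 : ∀ k, δ k ≤ 1 := fun k => div_le_one_of_le₀ (by simp) (by positivity)
  have hδ0 : Tendsto δ atTop (𝓝 0) := tendsto_one_div_add_atTop_nhds_zero_nat
  let φ : ℕ → ContDiffBump (0 : E) := fun k =>
    ⟨δ k * r / 2, δ k * r, half_pos (mul_pos (hδpos k) hr), half_lt_self (mul_pos (hδpos k) hr)⟩
  let v : ℕ → E → F := fun k =>
    (φ k).normed μ ⋆[lsmul ℝ ℝ, μ] (closedBall x (2 * r)).indicator u
  have hv : ∀ k, Continuous (v k) := fun k =>
    ((φ k).hasCompactSupport_normed.contDiff_convolution_left _ ((φ k).contDiff_normed (n := 0))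
      (hui.integrable_indicator measurableSet_closedBall).locallyIntegrable).continuous
  have hlim : ∀ z ∈ ball x r, ∀ y : ℕ → E, Tendsto y atTop (𝓝 z) →
      Tendsto (fun k => v k (y k)) atTop (𝓝 (u z)) := fun z hz y hy => by
    have hnhds : closedBall x (2 * r) ∈ 𝓝 z :=
      closedBall_mem_nhds_of_mem (ball_subset_ball (by linarith) hz)
    exact tendsto_convolution_normed_indicator (by simpa [φ] using hδ0.mul_const r)
      measurableSet_closedBall hui hnhds (hu.continuousAt (mem_of_superset hnhds hsub)) hy
  have hcenter : ∀ z, Tendsto (fun k => AffineMap.homothety x (δ k) z) atTop (𝓝 x) := fun z => by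
    simpa [AffineMap.homothety_apply] using (hδ0.smul_const (z - x)).add_const x
  calc ⨍⁻ z in ball x r, ‖u z - u x‖ₑ ∂μ
      = ⨍⁻ z in ball x r,
          liminf (fun k => ‖v k z - v k (AffineMap.homothety x (δ k) z)‖ₑ) atTop ∂μ :=
        setLAverage_congr_fun measurableSet_ball fun z hz =>
          ((hlim z hz _ tendsto_const_nhds).sub
            (hlim x (mem_ball_self hr) _ (hcenter z))).enorm.liminf_eq.symm
    _ ≤ liminf (fun k =>
          ⨍⁻ z in ball x r, ‖v k z - v k (AffineMap.homothety x (δ k) z)‖ₑ ∂μ) atTop :=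
        lintegral_liminf_le fun k => ((hv k).sub
          ((hv k).comp (AffineMap.homothety_continuous x (δ k)))).enorm.measurable
    _ ≤ liminf (fun _ : ℕ =>
          ENNReal.ofReal r * (2 ^ finrank ℝ E * localMaximal μ u' (2 * r) x)) atTop :=
        liminf_le_liminf (.of_forall fun k =>
          h.setLAverage_enorm_mollified_sub_le hsub hui hu' hr (φ k) (hδ1 k) rfl rfl)
    _ = ENNReal.ofReal r * (2 ^ finrank ℝ E * localMaximal μ u' (2 * r) x) := liminf_const _

lemma HasWeakFDerivOn.enorm_sub_le_localMaximal_add (h : HasWeakFDerivOn μ Ω u u')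
    (hu : ContinuousOn u Ω) (hu' : LocallyIntegrableOn u' Ω μ) {y : E}
    (hx : closedBall x (2 * r) ⊆ Ω) (hy : closedBall y (2 * r) ⊆ Ω) (hr : 0 < r)
    (hxy : dist x y ≤ r) :
    ‖u x - u y‖ₑ ≤ ENNReal.ofReal r *
      (4 ^ finrank ℝ E * (localMaximal μ u' (2 * r) x + localMaximal μ u' (2 * r) y)) := by
  have hmean : ∀ p, closedBall p (2 * r) ⊆ Ω → ⨍⁻ z in ball p r, ‖u z - u p‖ₑ ∂μ
      ≤ ENNReal.ofReal r * (2 ^ finrank ℝ E * localMaximal μ u' (2 * r) p) := fun p hp =>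
    h.setLAverage_enorm_sub_le hu hp
      (hu'.integrableOn_compact_subset hp (isCompact_closedBall _ _)) hr
  have hmeas : AEStronglyMeasurable u (μ.restrict (ball x r)) :=
    ((hu.mono hx).aestronglyMeasurable measurableSet_closedBall).mono_set
      (ball_subset_closedBall.trans (closedBall_subset_closedBall (by linarith)))
  calc ‖u x - u y‖ₑ
      ≤ 2 ^ finrank ℝ E *
          (⨍⁻ z in ball x r, ‖u z - u x‖ₑ ∂μ + ⨍⁻ z in ball y r, ‖u z - u y‖ₑ ∂μ) :=
        enorm_sub_le_setLAverage_add μ hr hxy hmeas _ _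
    _ ≤ 2 ^ finrank ℝ E *
          (ENNReal.ofReal r * (2 ^ finrank ℝ E * localMaximal μ u' (2 * r) x)
            + ENNReal.ofReal r * (2 ^ finrank ℝ E * localMaximal μ u' (2 * r) y)) := by
        gcongr
        exacts [hmean x hx, hmean y hy]
    _ = _ := by
        rw [show (4 : ℝ≥0∞) = 2 * 2 by norm_num, mul_pow]
        ring

end PoincareHajlasz

section UniformLebesguePoints

lemma exists_tendstoUniformlyOn_of_ae_tendsto {α β : Type*} [MeasurableSpace α]
    [PseudoEMetricSpace β] {μ : Measure α} [SFinite μ] {f : ℕ → α → β} {g : α → β}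
    (hf : ∀ n, StronglyMeasurable (f n)) (hg : StronglyMeasurable g) {s : Set α}
    (hs : MeasurableSet s)
    (h : ∀ᵐ x ∂μ, x ∈ s → Tendsto (fun n => f n x) atTop (𝓝 (g x))) :
    ∃ T : ℕ → Set α, (∀ k, MeasurableSet (T k)) ∧ (∀ k, T k ⊆ s) ∧
      (∀ k, TendstoUniformlyOn f g atTop (T k)) ∧ μ (s \ ⋃ k, T k) = 0 := by
  have hegorov := fun k : ℕ => tendstoUniformlyOn_of_ae_tendsto hf hg hs
    (measure_ne_top μ.toFinite s) (ae_toFinite.le h)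
    (Nat.one_div_pos_of_nat (α := ℝ) (n := k))
  choose t _ htm htμ hunif using hegorov
  refine ⟨fun k => s \ t k, fun k => hs.diff (htm k), fun k => sdiff_subset, hunif,
    absolutelyContinuous_toFinite μ (le_antisymm ?_ zero_le)⟩
  have hsub : ∀ k, s \ ⋃ k, s \ t k ⊆ t k := fun k x hx => by
    by_contra hxk
    exact hx.2 (mem_iUnion.2 ⟨k, hx.1, hxk⟩)
  have hlim : Tendsto (fun k : ℕ => ENNReal.ofReal (1 / ((k : ℝ) + 1))) atTop (𝓝 0) := by
    simpa using ENNReal.tendsto_ofReal tendsto_one_div_add_atTop_nhds_zero_nat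
  exact ge_of_tendsto' hlim fun k => (measure_mono (hsub k)).trans (htμ k)

variable {E F : Type*} [NormedAddCommGroup E] [MeasurableSpace E] [NormedAddCommGroup F]
  {μ : Measure E}

/-- The points of `s` are Lebesgue points of `D` with a common rate of convergence: the averages
of `‖D - D x‖` over balls centred at `x ∈ s` become small uniformly in `x` as the radius shrinks. -/
def IsUniformLebesgueSet (μ : Measure E) (D : E → F) (s : Set E) : Prop :=
  ∀ ε ≠ 0, ∀ᶠ R in 𝓝[>] (0 : ℝ), ∀ x ∈ s, localMaximal μ (fun z => D z - D x) R x ≤ ε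

variable [NormedSpace ℝ E] [FiniteDimensional ℝ E] [BorelSpace E] [μ.IsAddHaarMeasure]
  {D : E → F}

lemma ae_tendsto_setLAverage_enorm_sub {Ω : Set E} (hΩ : IsOpen Ω)
    (hD : LocallyIntegrableOn D Ω μ) :
    ∀ᵐ x ∂μ, x ∈ Ω →
      Tendsto (fun r => ⨍⁻ y in ball x r, ‖D y - D x‖ₑ ∂μ) (𝓝[>] 0) (𝓝 0) := by
  obtain ⟨U, hUo, hUΩ, hUi⟩ := hD.exists_nat_integrableOn
  have hleb := fun n => (Besicovitch.vitaliFamily μ).ae_tendsto_lintegral_enorm_sub_div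
    ((hUi n).integrable_indicator ((hUo n).inter hΩ).measurableSet).locallyIntegrable
  filter_upwards [ae_all_iff.2 hleb] with x hx hxΩ
  obtain ⟨n, hn⟩ := mem_iUnion.1 (hUΩ hxΩ)
  have hV : U n ∩ Ω ∈ 𝓝 x := ((hUo n).inter hΩ).mem_nhds ⟨hn, hxΩ⟩
  refine ((hx n).comp (Besicovitch.tendsto_filterAt μ x)).congr' ?_
  filter_upwards [nhdsWithin_le_nhds (eventually_closedBall_subset hV), self_mem_nhdsWithin]
    with r hr hr0
  have hball : ball x r =ᵐ[μ] closedBall x r := by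
    rw [← ball_union_sphere]
    exact (union_ae_eq_left_of_ae_eq_empty
      (ae_eq_empty.2 (Measure.addHaar_sphere_of_ne_zero μ x (ne_of_gt hr0)))).symm
  rw [Function.comp_apply, setLAverage_congr hball, setLAverage_eq]
  congr 1
  refine setLIntegral_congr_fun measurableSet_closedBall fun y hy => ?_
  rw [indicator_of_mem (hr hy), indicator_of_mem (mem_of_mem_nhds hV)]

lemma measurable_setLAverage_ball_enorm_sub (hD : StronglyMeasurable D) (r : ℝ) :
    Measurable fun x => ⨍⁻ y in ball x r, ‖D y - D x‖ₑ ∂μ := by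
  have hball : MeasurableSet {p : E × E | p.2 ∈ ball p.1 r} :=
    (isOpen_lt (continuous_snd.dist continuous_fst) continuous_const).measurableSet
  have hsub : Measurable fun p : E × E => ‖D p.2 - D p.1‖ₑ :=
    ((hD.comp_measurable measurable_snd).sub (hD.comp_measurable measurable_fst)).enorm
  simp_rw [setLAverage_eq, Measure.addHaar_ball_center μ _ r,
    ← lintegral_indicator measurableSet_ball]
  exact ((hsub.indicator hball).lintegral_prod_right' (ν := μ)).div_const _

lemma isUniformLebesgueSet_of_dyadic {s : Set E}
    (h : ∀ ε ≠ 0, ∀ᶠ j : ℕ in atTop, ∀ x ∈ s,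
      ⨍⁻ y in ball x ((1 / 2) ^ j), ‖D y - D x‖ₑ ∂μ ≤ ε) :
    IsUniformLebesgueSet μ D s := fun ε hε => by
  obtain ⟨J, hJ⟩ := eventually_atTop.1 (h (ε / 2 ^ finrank ℝ E)
    (ENNReal.div_ne_zero.2 ⟨hε, by simp⟩))
  filter_upwards [Ioo_mem_nhdsGT (show (0 : ℝ) < (1 / 2) ^ J by positivity)] with R hR x hx
  refine iSup₂_le fun t ht => ?_
  have htJ : t < (1 / 2) ^ J := ht.2.trans_lt hR.2
  obtain ⟨j, hj, hj'⟩ := exists_nat_pow_near_of_lt_one ht.1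
    (htJ.le.trans (pow_le_one₀ (by norm_num) (by norm_num))) one_half_pos one_half_lt_one
  have hJj : J ≤ j := by
    by_contra! hlt
    exact (hj.trans htJ).not_ge (pow_le_pow_of_le_one (by norm_num) (by norm_num) hlt)
  calc ⨍⁻ y in ball x t, ‖D y - D x‖ₑ ∂μ
      ≤ 2 ^ finrank ℝ E * ⨍⁻ y in ball x ((1 / 2) ^ j), ‖D y - D x‖ₑ ∂μ :=
        setLAverage_ball_le_of_subset μ (ball_subset_ball hj') (by rw [pow_succ] at hj; linarith) _
    _ ≤ 2 ^ finrank ℝ E * (ε / 2 ^ finrank ℝ E) := by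
        gcongr
        exact hJ j hJj x hx
    _ = ε := ENNReal.mul_div_cancel (by simp) (by simp)

lemma exists_isUniformLebesgueSet_cover (hD : StronglyMeasurable D) {s : Set E}
    (hs : MeasurableSet s) (h : ∀ᵐ x ∂μ, x ∈ s →
      Tendsto (fun r => ⨍⁻ y in ball x r, ‖D y - D x‖ₑ ∂μ) (𝓝[>] 0) (𝓝 0)) :
    ∃ T : ℕ → Set E, (∀ k, MeasurableSet (T k)) ∧ (∀ k, T k ⊆ s) ∧
      (∀ k, IsUniformLebesgueSet μ D (T k)) ∧ μ (s \ ⋃ k, T k) = 0 := by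
  have hradii : Tendsto (fun j : ℕ => (1 / 2 : ℝ) ^ j) atTop (𝓝[>] 0) :=
    tendsto_pow_atTop_nhdsWithin_zero_of_lt_one one_half_pos one_half_lt_one
  -- Egorov's theorem needs a metric on the target, so the averages are truncated at `1` and
  -- regarded as reals.
  obtain ⟨T, hTm, hTs, hunif, hnull⟩ := exists_tendstoUniformlyOn_of_ae_tendsto
    (f := fun (j : ℕ) x => (min (⨍⁻ y in ball x ((1 / 2) ^ j), ‖D y - D x‖ₑ ∂μ) 1).toReal)
    (g := 0) (fun j => ((measurable_setLAverage_ball_enorm_sub hD _).min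
      measurable_const).ennreal_toReal.stronglyMeasurable) stronglyMeasurable_zero hs (by
        filter_upwards [h] with x hx hxs
        simpa [Function.comp_def] using (ENNReal.tendsto_toReal (by simp)).comp
          (((hx hxs).comp hradii).min (tendsto_const_nhds (x := (1 : ℝ≥0∞)))))
  refine ⟨T, hTm, hTs, fun k => isUniformLebesgueSet_of_dyadic fun ε hε => ?_, hnull⟩
  have hmin : 0 < (min ε 1).toReal := ENNReal.toReal_pos (by simp [hε]) (by simp)
  filter_upwards [Metric.tendstoUniformlyOn_iff.1 (hunif k) _ hmin] with j hj x hx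
  have hlt := hj x hx
  rw [Pi.zero_apply, dist_zero_left, Real.norm_of_nonneg ENNReal.toReal_nonneg,
    ENNReal.toReal_lt_toReal (by simp) (by simp)] at hlt
  exact (min_lt_min_left_iff.1 hlt).1.le

end UniformLebesguePoints

section DerivativeWithin

variable {E F : Type*} [NormedAddCommGroup E] [NormedSpace ℝ E] [FiniteDimensional ℝ E]
  [MeasurableSpace E] {μ : Measure E} [μ.IsAddHaarMeasure]
  [NormedAddCommGroup F] {x y : E} {r : ℝ}

lemma localMaximal_sub_const_le (D : E → F) (a b : F) (R : ℝ) (x : E) :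
    localMaximal μ (fun z => D z - a) R x ≤ localMaximal μ (fun z => D z - b) R x + ‖b - a‖ₑ := by
  refine iSup₂_le fun s hs => ?_
  calc ⨍⁻ z in ball x s, ‖D z - a‖ₑ ∂μ
      ≤ ⨍⁻ z in ball x s, (‖D z - b‖ₑ + ‖b - a‖ₑ) ∂μ :=
        laverage_mono_ae (.of_forall fun z => by
          simpa only [edist_eq_enorm_sub] using edist_triangle (D z) b a)
    _ = ⨍⁻ z in ball x s, ‖D z - b‖ₑ ∂μ + ⨍⁻ _ in ball x s, ‖b - a‖ₑ ∂μ :=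
        lintegral_add_right _ measurable_const
    _ ≤ localMaximal μ (fun z => D z - b) R x + ‖b - a‖ₑ := by
        rw [setLAverage_const (measure_ball_pos μ x hs.1).ne' measure_ball_lt_top.ne]
        gcongr
        exact setLAverage_le_localMaximal (fun z => D z - b) x hs

variable [BorelSpace E]

lemma enorm_sub_le_localMaximal_sub_add {D : E → F} (hr : 0 < r) (hxy : dist x y ≤ r)
    (hD : AEStronglyMeasurable D (μ.restrict (ball x r))) (a b : F) :
    ‖a - b‖ₑ ≤ 2 ^ finrank ℝ E *
      (localMaximal μ (fun z => D z - a) r x + localMaximal μ (fun z => D z - b) r y) := by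
  refine (enorm_sub_le_setLAverage_add μ hr hxy hD a b).trans ?_
  gcongr
  exacts [setLAverage_le_localMaximal (fun z => D z - a) x (right_mem_Ioc.2 hr),
    setLAverage_le_localMaximal (fun z => D z - b) y (right_mem_Ioc.2 hr)]

variable [NormedSpace ℝ F] [CompleteSpace F] {Ω : Set E} {u : E → F} {u' : E → E →L[ℝ] F}

lemma HasWeakFDerivOn.enorm_sub_sub_apply_le (h : HasWeakFDerivOn μ Ω u u') (hΩ : IsOpen Ω)
    (hu : ContinuousOn u Ω) (hu' : LocallyIntegrableOn u' Ω μ)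
    (hx : closedBall x (2 * r) ⊆ Ω) (hy : closedBall y (2 * r) ⊆ Ω) (hr : 0 < r)
    (hxy : dist x y ≤ r) {ε : ℝ≥0∞}
    (hMx : localMaximal μ (fun z => u' z - u' x) (2 * r) x ≤ ε)
    (hMy : localMaximal μ (fun z => u' z - u' y) (2 * r) y ≤ ε) :
    ‖u y - u x - u' x (y - x)‖ₑ ≤ ENNReal.ofReal r *
      (4 ^ finrank ℝ E * (2 + 2 ^ finrank ℝ E * 2) * ε) := by
  have hconst : LocallyIntegrableOn (fun _ => u' x) Ω μ :=
    (locallyIntegrable_const _).locallyIntegrableOn Ω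
  have hsub := h.sub (hasWeakFDerivOn_continuousLinearMap (u' x))
    (hu.locallyIntegrableOn hΩ.measurableSet)
    ((u' x).continuous.locallyIntegrable.locallyIntegrableOn Ω) hu' hconst
  have hmeas : AEStronglyMeasurable u' (μ.restrict (ball x (2 * r))) :=
    (hu'.integrableOn_compact_subset hx (isCompact_closedBall _ _)).aestronglyMeasurable.mono_set
      ball_subset_closedBall
  have hosc : ‖u' y - u' x‖ₑ ≤ 2 ^ finrank ℝ E * (ε + ε) := by
    rw [enorm_sub_rev]
    refine (enorm_sub_le_localMaximal_sub_add (by positivity) (by linarith) hmeas _ _).trans ?_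
    gcongr
  calc ‖u y - u x - u' x (y - x)‖ₑ
      = ‖(u x - u' x x) - (u y - u' x y)‖ₑ := by
        rw [enorm_sub_rev, map_sub]; congr 1; abel
    _ ≤ ENNReal.ofReal r * (4 ^ finrank ℝ E * (localMaximal μ (fun z => u' z - u' x) (2 * r) x
          + localMaximal μ (fun z => u' z - u' x) (2 * r) y)) :=
        hsub.enorm_sub_le_localMaximal_add (hu.sub (u' x).continuous.continuousOn)
          (hu'.sub hconst) hx hy hr hxy
    _ ≤ ENNReal.ofReal r * (4 ^ finrank ℝ E * (ε + (ε + 2 ^ finrank ℝ E * (ε + ε)))) := by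
        gcongr
        exact (localMaximal_sub_const_le u' (u' x) (u' y) _ y).trans (by gcongr)
    _ = _ := by ring

lemma HasWeakFDerivOn.hasFDerivWithinAt (h : HasWeakFDerivOn μ Ω u u') (hΩ : IsOpen Ω)
    (hu : ContinuousOn u Ω) (hu' : LocallyIntegrableOn u' Ω μ) {T : Set E}
    (hT : IsUniformLebesgueSet μ u' T) (hx : x ∈ T) (hxΩ : x ∈ Ω) :
    HasFDerivWithinAt u (u' x) T x := by
  refine .of_isLittleO (Asymptotics.isLittleO_iff.2 fun c hc => ?_)
  set C : ℝ≥0∞ := 4 ^ finrank ℝ E * (2 + 2 ^ finrank ℝ E * 2) with hC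
  have hC0 : C ≠ 0 := by simp [hC]
  have hCtop : C ≠ ∞ := by simp [hC, ENNReal.mul_eq_top]
  obtain ⟨ρ, hρ, hmax⟩ := mem_nhdsGT_iff_exists_Ioo_subset.1
    (hT (ENNReal.ofReal c / C) (ENNReal.div_ne_zero.2 ⟨by simpa using hc, hCtop⟩))
  obtain ⟨δ, hδ, hball⟩ := Metric.isOpen_iff.1 hΩ x hxΩ
  filter_upwards [self_mem_nhdsWithin, nhdsWithin_le_nhds (ball_mem_nhds x (half_pos hρ)),
    nhdsWithin_le_nhds (ball_mem_nhds x (show 0 < δ / 3 by positivity))] with y hyT hyρ hyδ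
  rcases eq_or_ne y x with rfl | hne
  · simp
  have hr : 0 < dist y x := dist_pos.2 hne
  rw [mem_ball] at hyρ hyδ
  have hsmall := hmax (⟨by positivity, by linarith⟩ : 2 * dist y x ∈ Ioo 0 ρ)
  have hle := h.enorm_sub_sub_apply_le hΩ hu hu'
    ((closedBall_subset_ball (by linarith)).trans hball)
    ((closedBall_subset_ball' (by linarith)).trans hball) hr (dist_comm x y).le
    (hsmall x hx) (hsmall y hyT)
  rw [ENNReal.mul_div_cancel hC0 hCtop, ← ENNReal.ofReal_mul hr.le, ← ofReal_norm,
    ENNReal.ofReal_le_ofReal_iff (by positivity), dist_eq_norm, mul_comm] at hle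
  exact hle

lemma HasWeakFDerivOn.exists_cover_hasFDerivWithinAt (h : HasWeakFDerivOn μ Ω u u')
    (hΩ : IsOpen Ω) (hu : ContinuousOn u Ω) (hu' : LocallyIntegrableOn u' Ω μ) :
    ∃ T : ℕ → Set E, (∀ k, MeasurableSet (T k)) ∧ (∀ k, T k ⊆ Ω) ∧
      (∀ k, ∀ x ∈ T k, HasFDerivWithinAt u (u' x) (T k) x) ∧ μ (Ω \ ⋃ k, T k) = 0 := by
  have hmeas := hu'.aestronglyMeasurable
  have hD := hmeas.ae_eq_mk
  have hDi := hu'.congr hD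
  set D := hmeas.mk u'
  set N := toMeasurable μ {x | ¬(x ∈ Ω → u' x = D x)}
  have hN : μ N = 0 := (measure_toMeasurable _).trans
    (ae_iff.1 ((ae_restrict_iff' hΩ.measurableSet).1 hD))
  have hND : ∀ x ∈ Ω \ N, u' x = D x := fun x hx =>
    not_not.1 (fun hne => hx.2 (subset_toMeasurable μ _ hne)) hx.1
  obtain ⟨T, hTm, hTs, hTl, hnull⟩ := exists_isUniformLebesgueSet_cover
    (s := Ω \ N) hmeas.stronglyMeasurable_mk
    (hΩ.measurableSet.diff (measurableSet_toMeasurable μ _))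
    ((ae_tendsto_setLAverage_enorm_sub hΩ hDi).mono fun x hx hxs => hx hxs.1)
  refine ⟨T, hTm, fun k => (hTs k).trans sdiff_subset, fun k x hx => ?_, ?_⟩
  · rw [hND x (hTs k hx)]
    exact (h.congr_ae hD).hasFDerivWithinAt hΩ hu hDi (hTl k) hx (hTs k hx).1
  · rw [sdiff_right_comm] at hnull
    rwa [← measure_sdiff_null (s := Ω \ ⋃ k, T k) hN]

end DerivativeWithin

section AreaFormula

variable {E : Type*} [NormedAddCommGroup E] [NormedSpace ℝ E] [FiniteDimensional ℝ E]
  [MeasurableSpace E] [BorelSpace E] {μ : Measure E} [μ.IsAddHaarMeasure]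
  {f : E → E} {f' : E → E →L[ℝ] E}

lemma lintegral_abs_det_eq_measure_image_of_subset_iUnion {T : ℕ → Set E} {s : Set E}
    (hT : ∀ k, MeasurableSet (T k)) (hf' : ∀ k, ∀ x ∈ T k, HasFDerivWithinAt f (f' x) (T k) x)
    (hs : MeasurableSet s) (hsT : s ⊆ ⋃ k, T k) (hf : InjOn f s) :
    ∫⁻ x in s, ENNReal.ofReal |(f' x).det| ∂μ = μ (f '' s) := by
  let P : ℕ → Set E := fun k => s ∩ disjointed T k
  have hPs : ∀ k, P k ⊆ s := fun k => inter_subset_left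
  have hP : ∀ k, MeasurableSet (P k) := fun k => hs.inter (.disjointed hT k)
  have hdisj : Pairwise (Function.onFun Disjoint P) := fun i j hij =>
    (disjoint_disjointed T hij).mono inter_subset_right inter_subset_right
  have hunion : ⋃ k, P k = s := by
    rw [← inter_iUnion, iUnion_disjointed, inter_eq_left.2 hsT]
  have hderiv : ∀ k, ∀ x ∈ P k, HasFDerivWithinAt f (f' x) (P k) x := fun k x hx =>
    (hf' k x (disjointed_subset T k hx.2)).mono (inter_subset_right.trans (disjointed_subset T k))
  have hinj : ∀ k, InjOn f (P k) := fun k => hf.mono (hPs k)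
  calc ∫⁻ x in s, ENNReal.ofReal |(f' x).det| ∂μ
      = ∑' k, ∫⁻ x in P k, ENNReal.ofReal |(f' x).det| ∂μ := by
        rw [← lintegral_iUnion hP hdisj, hunion]
    _ = ∑' k, μ (f '' P k) := tsum_congr fun k =>
        lintegral_abs_det_fderiv_eq_addHaar_image μ (hP k) (hderiv k) (hinj k)
    _ = μ (f '' s) := by
        rw [← measure_iUnion
          (fun i j hij => (hdisj hij).image hf (hPs i) (hPs j))
          (fun k => measurable_image_of_fderivWithin (hP k) (hderiv k) (hinj k)),
          ← image_iUnion, hunion]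

variable {Ω₁ Ω₂ : Set E}

/-- A Sobolev homeomorphism may violate Lusin's condition (N), so the area formula need only hold
off a null set. -/
lemma HasWeakFDerivOn.exists_lintegral_abs_det_eq_measure_image (h : HasWeakFDerivOn μ Ω₁ f f')
    (hΩ₁ : IsOpen Ω₁) (hf : ContinuousOn f Ω₁) (hinj : InjOn f Ω₁)
    (hf' : LocallyIntegrableOn f' Ω₁ μ) :
    ∃ Ω₀ ⊆ Ω₁, MeasurableSet Ω₀ ∧ Ω₀ =ᵐ[μ] Ω₁ ∧ ∀ s ⊆ Ω₀, MeasurableSet s →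
      ∫⁻ x in s, ENNReal.ofReal |(f' x).det| ∂μ = μ (f '' s) := by
  obtain ⟨T, hT, hTΩ, hderiv, hnull⟩ := h.exists_cover_hasFDerivWithinAt hΩ₁ hf hf'
  have hsub : ⋃ k, T k ⊆ Ω₁ := iUnion_subset hTΩ
  exact ⟨⋃ k, T k, hsub, .iUnion hT, hsub.eventuallyLE.antisymm (ae_le_set.2 hnull),
    fun s hs hsm => lintegral_abs_det_eq_measure_image_of_subset_iUnion hT hderiv hsm hs
      (hinj.mono (hs.trans hsub))⟩

lemma measurableSet_preimage_inter_of_continuousOn {X Y : Type*} [TopologicalSpace X]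
    [MeasurableSpace X] [OpensMeasurableSpace X] [TopologicalSpace Y] [MeasurableSpace Y]
    [BorelSpace Y] {f : X → Y} {s : Set X} {t : Set Y} (hf : ContinuousOn f s)
    (ht : MeasurableSet t) (hs : MeasurableSet s) : MeasurableSet (f ⁻¹' t ∩ s) := by
  rw [inter_comm, ← Subtype.image_preimage_coe]
  exact hs.subtype_image (hf.domRestrict.measurable ht)

theorem sobolev_variation_bound_iff_pointwise_general (hΩ₁ : IsOpen Ω₁)
    (hf : ContinuousOn f Ω₁) (hinj : InjOn f Ω₁) (hmaps : MapsTo f Ω₁ Ω₂)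
    (h : HasWeakFDerivOn μ Ω₁ f f') (hf' : LocallyIntegrableOn f' Ω₁ μ)
    {w : E → ℝ≥0∞} (hw : AEMeasurable w (μ.restrict Ω₁)) (K : ℝ≥0∞) :
    (∀ A ⊆ Ω₂, MeasurableSet A → ∫⁻ x in f ⁻¹' A ∩ Ω₁, w x ∂μ ≤ K * μ A) ↔
      ∀ᵐ x ∂μ.restrict Ω₁, w x ≤ K * ENNReal.ofReal |(f' x).det| := by
  obtain ⟨Ω₀, hsub, hΩ₀, hae, harea⟩ :=
    h.exists_lintegral_abs_det_eq_measure_image hΩ₁ hf hinj hf'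
  have hJ : AEMeasurable (fun x => ENNReal.ofReal |(f' x).det|) (μ.restrict Ω₁) :=
    (ContinuousLinearMap.continuous_det.abs.comp_aestronglyMeasurable
      hf'.aestronglyMeasurable).aemeasurable.ennreal_ofReal
  rw [← Measure.restrict_congr_set hae] at hw hJ ⊢
  refine ⟨fun hbound => ae_le_of_forall_setLIntegral_le_of_sigmaFinite₀ hw fun s hs _ => ?_,
    fun hle A _ hA => ?_⟩
  · have himage : MeasurableSet (f '' (s ∩ Ω₀)) :=
      (hs.inter hΩ₀).image_of_continuousOn_injOn (hf.mono (inter_subset_right.trans hsub))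
        (hinj.mono (inter_subset_right.trans hsub))
    rw [Measure.restrict_restrict hs]
    calc ∫⁻ x in s ∩ Ω₀, w x ∂μ
        = ∫⁻ x in f ⁻¹' (f '' (s ∩ Ω₀)) ∩ Ω₁, w x ∂μ := by
          rw [hinj.preimage_image_inter (inter_subset_right.trans hsub)]
      _ ≤ K * μ (f '' (s ∩ Ω₀)) :=
          hbound _ ((hmaps.mono_left (inter_subset_right.trans hsub)).image_subset) himage
      _ = K * ∫⁻ x in s ∩ Ω₀, ENNReal.ofReal |(f' x).det| ∂μ := by
          rw [harea _ inter_subset_right (hs.inter hΩ₀)]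
      _ ≤ ∫⁻ x in s ∩ Ω₀, K * ENNReal.ofReal |(f' x).det| ∂μ := lintegral_const_mul_le _ _
  · have hpre : MeasurableSet (f ⁻¹' A ∩ Ω₀) :=
      measurableSet_preimage_inter_of_continuousOn (hf.mono hsub) hA hΩ₀
    calc ∫⁻ x in f ⁻¹' A ∩ Ω₁, w x ∂μ
        = ∫⁻ x in f ⁻¹' A ∩ Ω₀, w x ∂μ := by
          rw [Measure.restrict_congr_set ((ae_eq_refl _).inter hae)]
      _ ≤ ∫⁻ x in f ⁻¹' A ∩ Ω₀, K * ENNReal.ofReal |(f' x).det| ∂μ :=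
          lintegral_mono_ae (ae_restrict_of_ae_restrict_of_subset inter_subset_right hle)
      _ = K * μ (f '' (f ⁻¹' A ∩ Ω₀)) := by
          rw [lintegral_const_mul'' _ (hJ.mono_measure (Measure.restrict_mono_set μ
            inter_subset_right)), harea _ inter_subset_right hpre]
      _ ≤ K * μ A := by
          gcongr
          exact (image_mono inter_subset_left).trans (image_preimage_subset f A)

end AreaFormula

section Coordinates

variable {n : ℕ}

/-- The linear map of `ℝⁿ` with a given array of entries, as a continuous linear function of the
array. It turns the matrix field `Df` of `IsWeakDerivOn` into the operator field of
`HasWeakFDerivOn`. -/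
def entriesToEuclideanCLM (n : ℕ) : (Fin n → Fin n → ℝ) →L[ℝ] En n →L[ℝ] En n :=
  LinearMap.toContinuousLinearMap
    ((Matrix.toEuclideanCLM (n := Fin n) (𝕜 := ℝ)).toAlgEquiv.toLinearMap ∘ₗ
      (Matrix.ofLinearEquiv ℝ).toLinearMap)

lemma entriesToEuclideanCLM_apply_single (M : Fin n → Fin n → ℝ) (i j : Fin n) :
    entriesToEuclideanCLM n M (EuclideanSpace.single i 1) j = M j i := by
  simp [entriesToEuclideanCLM, Matrix.ofLp_toEuclideanCLM]

lemma det_entriesToEuclideanCLM (M : Fin n → Fin n → ℝ) :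
    (entriesToEuclideanCLM n M).det = (Matrix.of M).det := by
  change LinearMap.det (Matrix.toEuclideanCLM (𝕜 := ℝ) (Matrix.of M)).toLinearMap = _
  rw [Matrix.coe_toEuclideanCLM_eq_toEuclideanLin, Matrix.toEuclideanLin_eq_toLin_orthonormal,
    LinearMap.det_toLin]

lemma continuous_frobNorm {m : ℕ} : Continuous (frobNorm (m := m) (n := n)) := by
  unfold frobNorm
  fun_prop

lemma IsWeakDerivOn.hasWeakFDerivOn {Ω : Set (En n)} {f : En n → En n}
    {Df : En n → Fin n → Fin n → ℝ} (h : IsWeakDerivOn Ω f Df)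
    (hf : LocallyIntegrableOn f Ω volume) (hDf : LocallyIntegrableOn Df Ω volume) :
    HasWeakFDerivOn volume Ω f fun x => entriesToEuclideanCLM n (Df x) := fun φ hφ hc hs => by
  have hleft : Integrable fun x => (fderiv ℝ φ x).smulRight (f x) :=
    integrable_bilin_of_hasCompactSupport (ContinuousLinearMap.smulRightL ℝ (En n) (En n))
      (hφ.continuous_fderiv (by simp)) (hc.fderiv ℝ) ((tsupport_fderiv_subset ℝ).trans hs) hf
  have hright : Integrable fun x => φ x • entriesToEuclideanCLM n (Df x) := by
    simpa using (entriesToEuclideanCLM n).integrable_comp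
      (integrable_bilin_of_hasCompactSupport (lsmul ℝ ℝ) hφ.continuous hc hs hDf)
  refine ContinuousLinearMap.coe_injective
    ((EuclideanSpace.basisFun (Fin n) ℝ).toBasis.ext fun i => ?_)
  ext j
  let entry : (En n →L[ℝ] En n) →L[ℝ] ℝ :=
    EuclideanSpace.proj j ∘L ContinuousLinearMap.apply ℝ (En n) (EuclideanSpace.single i 1)
  have hentry := h φ ⟨hφ, hc, hs⟩ j i
  calc _ = entry (∫ x in Ω, (fderiv ℝ φ x).smulRight (f x)) := by simp [entry]
    _ = ∫ x in Ω, f x j * fderiv ℝ φ x (EuclideanSpace.single i 1) := by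
        rw [← entry.integral_comp_comm hleft.integrableOn]
        simp [entry, mul_comm]
    _ = -∫ x in Ω, φ x * Df x j i := hentry
    _ = entry (-∫ x in Ω, φ x • entriesToEuclideanCLM n (Df x)) := by
        rw [map_neg, ← entry.integral_comp_comm hright.integrableOn]
        simp [entry, entriesToEuclideanCLM_apply_single]
    _ = _ := by simp [entry]

end Coordinates

/-- **Corollary (Statement 9).** For a homeomorphism `f ∈ W^{1,1}_loc(Ω₁, ℝⁿ)` with weak
derivative `Df`, the measure bound `|Df|(f⁻¹(A)) ≤ K·Lⁿ(A)` for all Borel `A ⊆ Ω₂` is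
equivalent to `|Df(x)| ≤ K·|J_f(x)|` for a.e. `x ∈ Ω₁`. -/
theorem sobolev_variation_bound_iff_pointwise {n : ℕ}
    (Ω₁ Ω₂ : Set (En n)) (hΩ₁ : IsOpen Ω₁) (hΩ₂ : IsOpen Ω₂)
    (f g : En n → En n) (hf : IsHomeoOn f g Ω₁ Ω₂)
    (Df : En n → Fin n → Fin n → ℝ)
    (hfloc : LocallyIntegrableOn f Ω₁ volume)
    (hDfloc : LocallyIntegrableOn Df Ω₁ volume)
    (hweak : IsWeakDerivOn Ω₁ f Df)
    (K : ℝ) (hK : 0 < K) :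
    (∀ A : Set (En n), A ⊆ Ω₂ → MeasurableSet A →
        ∫⁻ x in f ⁻¹' A ∩ Ω₁, ENNReal.ofReal (frobNorm (Df x)) ∂volume
          ≤ ENNReal.ofReal K * volume A)
      ↔ (∀ᵐ x ∂volume.restrict Ω₁,
          frobNorm (Df x) ≤ K * |Matrix.det (Matrix.of fun j i => Df x j i)|) := by
  obtain ⟨hcont, -, hmaps, -, hleft, -⟩ := hf
  have hinj : InjOn f Ω₁ := (show LeftInvOn g f Ω₁ from hleft).injOn
  have hw : AEMeasurable (fun x => ENNReal.ofReal (frobNorm (Df x))) (volume.restrict Ω₁) :=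
    (continuous_frobNorm.comp_aestronglyMeasurable
      hDfloc.aestronglyMeasurable).aemeasurable.ennreal_ofReal
  rw [sobolev_variation_bound_iff_pointwise_general hΩ₁ hcont hinj hmaps
    (hweak.hasWeakFDerivOn hfloc hDfloc)
    ((entriesToEuclideanCLM n).locallyIntegrableOn_comp hDfloc) hw]
  simp only [det_entriesToEuclideanCLM, ← ENNReal.ofReal_mul hK.le]
  exact eventually_congr (.of_forall fun x => ENNReal.ofReal_le_ofReal_iff (by positivity))
end
end

section
/- Let Ω₁, Ω₂ ⊆ ℝⁿ be open and let f : Ω₁ → Ω₂ be a homeomorphism such that f⁻¹ is Lipschitz. Then f ∈ BV_loc(Ω₁, Ω₂) and there is a constant K > 0 (one may take K = C(n)·‖D(f⁻¹)‖_{L^∞}^{n−1} with C(n) depending only on n) such that |Df|(f⁻¹(A)) ≤ K·Lⁿ(A) for all Borel sets A ⊆ Ω₂. -/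
open MeasureTheory Metric Set Filter
open scoped ENNReal Topology NNReal

noncomputable section

/-!
Write `g = f⁻¹`, let `L` be its Lipschitz constant and let `μ` be the image of Lebesgue measure on
`Ω₂` under `g`. Everything reduces to the inequality
`|∫ f_j ∂_i φ| ≤ (2 L √n) ^ (n - 1) ∫ |φ| dμ` for test functions `φ`: by duality between `L¹(μ)`
and `L^∞(μ)` the functional on the left is then integration against a bounded density times `μ`,
and `μ (f⁻¹ A)` is the Lebesgue measure of `A`.

For the inequality, bound the difference quotients of `f` at step `t`. Cut the target into cubes of
side `δ`. If `f_j` varies by `m` along the segment from `x` to `x + t eᵢ`, then the image of this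
segment meets at least about `m / δ` cubes, and whenever it meets a cube `Q`, the point `x` lies in
the preimage `g Q`, of diameter at most `L √n δ`, swept by length `t` in the direction `-eᵢ`: a set
of measure at most `(2 L √n δ) ^ (n - 1) (t + 2 L √n δ)`. Summing `δ` times this over the cubes and
comparing `δ ^ n` with the measure of `Q` gives `(2 L √n) ^ (n - 1) t (1 + o(1)) ∫ |φ| dμ` as soon
as `δ = o(t)`.
-/

section Duality

theorem exists_strongDual_comp_eq {𝕜 V E : Type*} [RCLike 𝕜] [AddCommGroup V] [Module 𝕜 V]
    [SeminormedAddCommGroup E] [NormedSpace 𝕜 E] (J : V →ₗ[𝕜] E) (T : V →ₗ[𝕜] 𝕜) {M : ℝ}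
    (hM : 0 ≤ M) (hT : ∀ v, ‖T v‖ ≤ M * ‖J v‖) :
    ∃ G : StrongDual 𝕜 E, ‖G‖ ≤ M ∧ ∀ v, G (J v) = T v := by
  obtain ⟨S, rfl⟩ : T ∈ LinearMap.range J.dualMap := by
    rw [LinearMap.range_dualMap_eq_dualAnnihilator_ker, Submodule.mem_dualAnnihilator]
    intro v hv
    simpa [LinearMap.mem_ker.1 hv] using hT v
  let S₀ : StrongDual 𝕜 (LinearMap.range J) :=
    (S.domRestrict (LinearMap.range J)).mkContinuous M (by rintro ⟨_, v, rfl⟩; exact hT v)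
  obtain ⟨G, hGS, hG⟩ := exists_extension_norm_eq (LinearMap.range J) S₀
  exact ⟨G, hG.trans_le (LinearMap.mkContinuous_norm_le _ hM _),
    fun v => hGS ⟨J v, LinearMap.mem_range_self J v⟩⟩

variable {X : Type*} [MeasurableSpace X] {μ : Measure X}

theorem exists_lp_two_forall_indicatorConstLp_eq [IsFiniteMeasure μ]
    (G : StrongDual ℝ (Lp ℝ 1 μ)) :
    ∃ s : Lp ℝ 2 μ, ∀ (c : ℝ) A (hA : MeasurableSet A),
      G (indicatorConstLp 1 hA (measure_ne_top μ A) c) = c * ∫ x in A, s x ∂μ := by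
  let ι : Lp ℝ 2 μ →L[ℝ] Lp ℝ 1 μ :=
    (ContinuousLinearMap.mul ℝ ℝ).holderL μ 2 2 1 (Lp.const 2 μ 1)
  let s := (InnerProductSpace.toDual ℝ (Lp ℝ 2 μ)).symm (G ∘L ι)
  refine ⟨s, fun c A hA => ?_⟩
  have hι : ι (indicatorConstLp 2 hA (measure_ne_top μ A) c)
      = indicatorConstLp 1 hA (measure_ne_top μ A) c := by
    refine Lp.ext ?_
    filter_upwards [(ContinuousLinearMap.mul ℝ ℝ).coeFn_holder (r := 1) (Lp.const 2 μ 1)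
      (indicatorConstLp 2 hA (measure_ne_top μ A) c), Lp.coeFn_const 2 μ (1 : ℝ),
      indicatorConstLp_coeFn (p := 2) (hs := hA) (hμs := measure_ne_top μ A) (c := c),
      indicatorConstLp_coeFn (p := 1) (hs := hA) (hμs := measure_ne_top μ A) (c := c)]
      with x h₁ h₂ h₃ h₄
    rw [ContinuousLinearMap.holderL_apply_apply, h₁, h₂, h₃, h₄, ContinuousLinearMap.mul_apply',
      Function.const_apply, one_mul]
  calc G (indicatorConstLp 1 hA (measure_ne_top μ A) c)
      = inner ℝ s (indicatorConstLp 2 hA (measure_ne_top μ A) c) := by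
        rw [InnerProductSpace.toDual_symm_apply, ContinuousLinearMap.comp_apply, hι]
    _ = c * ∫ x in A, s x ∂μ := by
        rw [real_inner_comm, L2.inner_indicatorConstLp_eq_inner_setIntegral, mul_comm]
        rfl

theorem exists_abs_le_norm_forall_indicatorConstLp_eq [IsFiniteMeasure μ]
    (G : StrongDual ℝ (Lp ℝ 1 μ)) :
    ∃ σ : X → ℝ, Measurable σ ∧ (∀ x, |σ x| ≤ ‖G‖) ∧ ∀ (c : ℝ) A (hA : MeasurableSet A),
      G (indicatorConstLp 1 hA (measure_ne_top μ A) c) = c * ∫ x in A, σ x ∂μ := by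
  obtain ⟨s, hs⟩ := exists_lp_two_forall_indicatorConstLp_eq G
  have hs_int : Integrable s μ := (Lp.memLp s).integrable one_le_two
  have abs_setIntegral_le (A : Set X) (hA : MeasurableSet A) :
      |∫ x in A, s x ∂μ| ≤ ∫ _ in A, ‖G‖ ∂μ := by
    rw [← one_mul (∫ x in A, s x ∂μ), ← hs 1 A hA, ← Real.norm_eq_abs]
    refine (G.le_opNorm _).trans_eq ?_
    rw [norm_indicatorConstLp one_ne_zero ENNReal.one_ne_top, setIntegral_const]
    simp [mul_comm]
  have hs_le : ∀ᵐ x ∂μ, s x ≤ ‖G‖ :=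
    ae_le_of_forall_setIntegral_le hs_int (integrable_const _) fun A hA _ =>
      (abs_le.1 (abs_setIntegral_le A hA)).2
  have hs_ge : ∀ᵐ x ∂μ, -‖G‖ ≤ s x :=
    ae_le_of_forall_setIntegral_le (integrable_const _) hs_int fun A hA _ => by
      simpa only [integral_neg] using (abs_le.1 (abs_setIntegral_le A hA)).1
  let σ : X → ℝ := fun x => max (-‖G‖) (min ‖G‖ (s x))
  have hσ : Measurable σ :=
    measurable_const.max (measurable_const.min (Lp.stronglyMeasurable s).measurable)
  have hσG (x : X) : |σ x| ≤ ‖G‖ :=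
    abs_le.2 ⟨le_max_left _ _, max_le (neg_le_self (norm_nonneg G)) (min_le_left _ _)⟩
  have hσs : σ =ᵐ[μ] s := by
    filter_upwards [hs_le, hs_ge] with x h₁ h₂
    simp only [σ, min_eq_right h₁, max_eq_right h₂]
  exact ⟨σ, hσ, hσG, fun c A hA => by
    rw [hs, integral_congr_ae (ae_restrict_of_ae hσs)]⟩

theorem exists_abs_le_norm_eq_integral_mul [IsFiniteMeasure μ]
    (G : StrongDual ℝ (Lp ℝ 1 μ)) :
    ∃ σ : X → ℝ, Measurable σ ∧ (∀ x, |σ x| ≤ ‖G‖) ∧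
      ∀ u : Lp ℝ 1 μ, G u = ∫ x, u x * σ x ∂μ := by
  obtain ⟨σ, hσ, hσG, hGσ⟩ := exists_abs_le_norm_forall_indicatorConstLp_eq G
  refine ⟨σ, hσ, hσG, fun u => ?_⟩
  have hσ_mem : MemLp σ ∞ μ :=
    memLp_top_of_bound hσ.aestronglyMeasurable ‖G‖ (ae_of_all _ hσG)
  let P : StrongDual ℝ (Lp ℝ 1 μ) :=
    ((ContinuousLinearMap.mul ℝ ℝ).lpPairing μ 1 ∞).flip (hσ_mem.toLp σ)
  have hP (u : Lp ℝ 1 μ) : P u = ∫ x, u x * σ x ∂μ := by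
    refine (ContinuousLinearMap.lpPairing_eq_integral _ u _).trans (integral_congr_ae ?_)
    filter_upwards [hσ_mem.coeFn_toLp] with x hx
    rw [hx, ContinuousLinearMap.mul_apply']
  rw [← hP]
  induction u using Lp.induction ENNReal.one_ne_top with
  | @indicatorConst c A hA hμA =>
    have hA_ae : indicatorConstLp 1 hA hμA.ne c =ᵐ[μ] A.indicator fun _ => c :=
      indicatorConstLp_coeFn
    rw [Lp.simpleFunc.coe_indicatorConst, hGσ, hP, ← integral_const_mul,
      ← integral_indicator hA]
    refine integral_congr_ae ?_
    filter_upwards [hA_ae] with x hx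
    rw [hx]
    by_cases hx' : x ∈ A <;> simp [hx']
  | add f g _ ihf ihg => rw [map_add, map_add, ihf, ihg]
  | isClosed => exact isClosed_eq G.continuous P.continuous

variable {V : Type*} [AddCommGroup V] [Module ℝ V] (J : V →ₗ[ℝ] X → ℝ) (T : V →ₗ[ℝ] ℝ) {M : ℝ}

theorem exists_abs_le_eq_integral_mul_of_isFiniteMeasure [IsFiniteMeasure μ] (hM : 0 ≤ M)
    (hJ : ∀ v, Integrable (J v) μ) (hT : ∀ v, |T v| ≤ M * ∫ x, |J v x| ∂μ) :
    ∃ σ : X → ℝ, Measurable σ ∧ (∀ x, |σ x| ≤ M) ∧ ∀ v, T v = ∫ x, J v x * σ x ∂μ := by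
  let J₁ : V →ₗ[ℝ] Lp ℝ 1 μ :=
    { toFun := fun v => (hJ v).toL1 (J v)
      map_add' := fun v w => by simp only [map_add, ← Integrable.toL1_add]
      map_smul' := fun c v => by simp only [map_smul, RingHom.id_apply, ← Integrable.toL1_smul'] }
  obtain ⟨G, hGM, hG⟩ := exists_strongDual_comp_eq J₁ T hM fun v =>
    (hT v).trans_eq (congrArg _ (L1.norm_of_fun_eq_integral_norm (hJ v)).symm)
  obtain ⟨σ, hσ, hσG, hGσ⟩ := exists_abs_le_norm_eq_integral_mul G
  refine ⟨σ, hσ, fun x => (hσG x).trans hGM, fun v => ?_⟩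
  rw [← hG, hGσ]
  refine integral_congr_ae ?_
  filter_upwards [(hJ v).coeFn_toL1] with x hx
  rw [← hx]
  rfl

theorem exists_abs_le_eq_integral_mul [SigmaFinite μ] (hM : 0 ≤ M)
    (hJ : ∀ v, Integrable (J v) μ) (hT : ∀ v, |T v| ≤ M * ∫ x, |J v x| ∂μ) :
    ∃ σ : X → ℝ, Measurable σ ∧ (∀ x, |σ x| ≤ M) ∧ ∀ v, T v = ∫ x, J v x * σ x ∂μ := by
  obtain ⟨w, hw_pos, hw, hw_int⟩ := exists_pos_lintegral_lt_of_sigmaFinite μ one_ne_zero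
  have : IsFiniteMeasure (μ.withDensity fun x => w x) :=
    isFiniteMeasure_withDensity (hw_int.trans ENNReal.one_lt_top).ne
  let J' : V →ₗ[ℝ] X → ℝ :=
    { toFun := fun v x => (w x : ℝ)⁻¹ * J v x
      map_add' := fun v u => by ext x; simp only [map_add, Pi.add_apply, mul_add]
      map_smul' := fun c v => by
        ext x; simp only [map_smul, Pi.smul_apply, smul_eq_mul, RingHom.id_apply, mul_left_comm] }
  have smul_J' (v : V) (x : X) : w x • J' v x = J v x :=
    mul_inv_cancel_left₀ (NNReal.coe_ne_zero.2 (hw_pos x).ne') (J v x)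
  have hJ' (v : V) : Integrable (J' v) (μ.withDensity fun x => w x) := by
    rw [integrable_withDensity_iff_integrable_smul hw]
    simpa only [smul_J'] using hJ v
  have integral_J' (v : V) : ∫ x, |J' v x| ∂μ.withDensity (fun x => w x) = ∫ x, |J v x| ∂μ := by
    rw [integral_withDensity_eq_integral_smul hw]
    refine integral_congr_ae (ae_of_all _ fun x => ?_)
    change w x • |J' v x| = |J v x|
    rw [← smul_J', NNReal.smul_def, NNReal.smul_def, smul_eq_mul, smul_eq_mul, abs_mul,
      abs_of_nonneg (w x).coe_nonneg]
  obtain ⟨σ, hσ, hσM, hTσ⟩ := exists_abs_le_eq_integral_mul_of_isFiniteMeasure J' T hM hJ'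
    fun v => (integral_J' v).symm ▸ hT v
  refine ⟨σ, hσ, hσM, fun v => ?_⟩
  rw [hTσ, integral_withDensity_eq_integral_smul hw]
  simp only [← smul_mul_assoc, smul_J']

end Duality

section FrobNorm

variable {m n : ℕ}

theorem abs_le_frobNorm (A : Fin m → Fin n → ℝ) (j : Fin m) (i : Fin n) :
    |A j i| ≤ frobNorm A := by
  refine Real.abs_le_sqrt ?_
  calc A j i ^ 2 ≤ ∑ i, A j i ^ 2 :=
        Finset.single_le_sum (fun i _ => sq_nonneg (A j i)) (Finset.mem_univ i)
    _ ≤ ∑ j, ∑ i, A j i ^ 2 :=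
        Finset.single_le_sum (f := fun j => ∑ i, A j i ^ 2)
          (fun j _ => Finset.sum_nonneg fun i _ => sq_nonneg (A j i)) (Finset.mem_univ j)

theorem frobNorm_smul (c : ℝ) (A : Fin m → Fin n → ℝ) : frobNorm (c • A) = |c| * frobNorm A := by
  simp only [frobNorm, Pi.smul_apply, smul_eq_mul, mul_pow, ← Finset.mul_sum]
  rw [Real.sqrt_mul (sq_nonneg c), Real.sqrt_sq_eq_abs]

theorem frobNorm_le {A : Fin m → Fin n → ℝ} {M : ℝ} (hM : 0 ≤ M) (hA : ∀ j i, |A j i| ≤ M) :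
    frobNorm A ≤ √(m * n) * M := by
  refine Real.sqrt_le_iff.2 ⟨by positivity, ?_⟩
  calc ∑ j, ∑ i, A j i ^ 2 = ∑ j, ∑ i, |A j i| ^ 2 := by simp only [sq_abs]
    _ ≤ ∑ _j : Fin m, ∑ _i : Fin n, M ^ 2 := by
        gcongr with j _ i _
        exact hA j i
    _ = (√(m * n) * M) ^ 2 := by
        rw [mul_pow, Real.sq_sqrt (by positivity)]
        simp only [Finset.sum_const, Finset.card_univ, Fintype.card_fin, nsmul_eq_mul]
        ring

theorem measurable_frobNorm : Measurable (frobNorm : (Fin m → Fin n → ℝ) → ℝ) := by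
  unfold frobNorm
  fun_prop

end FrobNorm

section BVCriterion

theorem sigmaFinite_of_isCompact_lt_top {X : Type*} [TopologicalSpace X] [MeasurableSpace X]
    {μ : Measure X} {Ω : Set X} (hΩ : IsSigmaCompact Ω)
    (hμ : ∀ C, IsCompact C → C ⊆ Ω → μ C < ∞) (hμΩ : μ Ωᶜ = 0) : SigmaFinite μ := by
  obtain ⟨K, hK, hKΩ⟩ := hΩ
  refine Measure.sigmaFinite_of_countable (S := insert Ωᶜ (range K))
    ((countable_range K).insert _) ?_ ?_
  · rintro _ (rfl | ⟨k, rfl⟩)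
    · exact hμΩ.trans_lt ENNReal.zero_lt_top
    · exact hμ _ (hK k) (hKΩ ▸ subset_iUnion K k)
  · rw [sUnion_insert, sUnion_range, hKΩ, compl_union_self]

theorem integrable_of_hasCompactSupport_of_isCompact_lt_top {X E : Type*} [TopologicalSpace X]
    [MeasurableSpace X] [OpensMeasurableSpace X] [NormedAddCommGroup E]
    {μ : Measure X} {φ : X → E} (hφ : Continuous φ) (hφ' : HasCompactSupport φ)
    (hμ : μ (tsupport φ) < ∞) : Integrable φ μ := by
  obtain ⟨C, hC⟩ := hφ'.exists_bound_of_continuous hφ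
  have hφm : AEStronglyMeasurable φ μ :=
    (hφ.stronglyMeasurable_of_hasCompactSupport hφ').aestronglyMeasurable
  rw [← integrableOn_iff_integrable_of_support_subset (subset_tsupport φ)]
  exact IntegrableOn.of_bound hμ hφm.restrict C (ae_of_all _ hC)

open Distributions TopologicalSpace

theorem exists_abs_le_integral_lineDeriv_mul_eq_neg {E : Type*} [NormedAddCommGroup E]
    [NormedSpace ℝ E] [MeasurableSpace E] [BorelSpace E] {Ω : Opens E} {ν μ : Measure E}
    [SigmaFinite μ] {u : E → ℝ} (hu : LocallyIntegrableOn u Ω ν) (v : E) {M : ℝ} (hM : 0 ≤ M)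
    (hμ : ∀ φ : 𝓓(Ω, ℝ), Integrable φ μ)
    (h : ∀ φ : 𝓓(Ω, ℝ), |∫ x, lineDeriv ℝ φ x v * u x ∂ν| ≤ M * ∫ x, |φ x| ∂μ) :
    ∃ σ : E → ℝ, Measurable σ ∧ (∀ x, |σ x| ≤ M) ∧
      ∀ φ : 𝓓(Ω, ℝ), ∫ x, lineDeriv ℝ φ x v * u x ∂ν = -∫ x, φ x * σ x ∂μ := by
  let J : 𝓓(Ω, ℝ) →ₗ[ℝ] E → ℝ :=
    { toFun := fun φ => φ
      map_add' := fun _ _ => rfl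
      map_smul' := fun _ _ => rfl }
  let D : 𝓓(Ω, ℝ) →L[ℝ] ℝ :=
    TestFunction.integralAgainstBilinCLM (ContinuousLinearMap.mul ℝ ℝ) ν u ∘L
      (TestFunction.lineDerivCLM ℝ v : 𝓓(Ω, ℝ) →L[ℝ] 𝓓(Ω, ℝ))
  have hD (φ : 𝓓(Ω, ℝ)) : D φ = ∫ x, lineDeriv ℝ φ x v * u x ∂ν := by
    simp [D, hu]
  obtain ⟨σ, hσ, hσM, hTσ⟩ := exists_abs_le_eq_integral_mul J (-D : 𝓓(Ω, ℝ) →L[ℝ] ℝ) hM hμ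
    fun φ => by simpa [hD, J] using h φ
  refine ⟨σ, hσ, hσM, fun φ => ?_⟩
  rw [← hD, ← neg_inj, neg_neg]
  exact hTσ φ

theorem memBVloc_withDensity_frobNorm {m n : ℕ} {Ω : Set (En n)} {f : En n → En m}
    (hf : LocallyIntegrableOn f Ω) {μ : Measure (En n)} (hμΩ : μ Ωᶜ = 0)
    (hμ : ∀ C, IsCompact C → C ⊆ Ω → μ C < ∞) {σ : En n → Fin m → Fin n → ℝ} (hσ : Measurable σ)
    {M : ℝ} (hσM : ∀ x, frobNorm (σ x) ≤ M)
    (h : ∀ φ : En n → ℝ, SmoothTest Ω φ → ∀ j i,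
      ∫ x in Ω, f x j * fderiv ℝ φ x (EuclideanSpace.single i 1) = -∫ x, φ x * σ x j i ∂μ) :
    MemBVloc Ω f (μ.withDensity fun x => ENNReal.ofReal (frobNorm (σ x))) := by
  have hN : Measurable fun x => (frobNorm (σ x)).toNNReal :=
    (measurable_frobNorm.comp hσ).real_toNNReal
  refine ⟨hf, fun C hC hCΩ => ?_, fun x => (frobNorm (σ x))⁻¹ • σ x,
    (measurable_frobNorm.comp hσ).inv.smul hσ, ?_,
    withDensity_absolutelyContinuous _ _ hμΩ, fun φ hφ j i => ?_⟩
  · calc μ.withDensity (fun x => ENNReal.ofReal (frobNorm (σ x))) C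
        ≤ μ.withDensity (fun _ => ENNReal.ofReal M) C :=
          withDensity_mono (ae_of_all _ fun x => ENNReal.ofReal_le_ofReal (hσM x)) C
      _ = ENNReal.ofReal M * μ C := by rw [withDensity_const]; rfl
      _ < ∞ := ENNReal.mul_lt_top ENNReal.ofReal_lt_top (hμ C hC hCΩ)
  · refine (ae_withDensity_iff hN.coe_nnreal_ennreal).2 (ae_of_all _ fun x hx => ?_)
    have hx_pos : 0 < frobNorm (σ x) := by
      simpa only [ne_eq, ENNReal.coe_eq_zero, Real.toNNReal_eq_zero, not_le] using hx
    rw [frobNorm_smul, abs_of_pos (inv_pos.2 hx_pos), inv_mul_cancel₀ hx_pos.ne']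
  · rw [h φ hφ j i]
    refine congrArg Neg.neg (Eq.trans (integral_congr_ae (ae_of_all _ fun x => ?_))
      (integral_withDensity_eq_integral_smul hN _).symm)
    change φ x * σ x j i
      = ((frobNorm (σ x)).toNNReal : ℝ) * (φ x * ((frobNorm (σ x))⁻¹ * σ x j i))
    rw [Real.coe_toNNReal (frobNorm (σ x)) (Real.sqrt_nonneg _)]
    obtain hx | hx := eq_or_ne (frobNorm (σ x)) 0
    · have hxji : σ x j i = 0 := abs_nonpos_iff.1 ((abs_le_frobNorm (σ x) j i).trans_eq hx)
      simp only [hxji, mul_zero]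
    · field_simp

theorem exists_memBVloc_le_smul {m n : ℕ} {Ω : Set (En n)} (hΩ : IsOpen Ω) {f : En n → En m}
    (hf : LocallyIntegrableOn f Ω) {μ : Measure (En n)} (hμΩ : μ Ωᶜ = 0)
    (hμ : ∀ C, IsCompact C → C ⊆ Ω → μ C < ∞) {M : ℝ} (hM : 0 ≤ M)
    (h : ∀ φ : En n → ℝ, SmoothTest Ω φ → ∀ j i,
      |∫ x in Ω, f x j * fderiv ℝ φ x (EuclideanSpace.single i 1)| ≤ M * ∫ x, |φ x| ∂μ) :
    ∃ ν, MemBVloc Ω f ν ∧ ν ≤ ENNReal.ofReal (√(m * n) * M) • μ := by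
  have : LocallyCompactSpace Ω := hΩ.locallyCompactSpace
  have : SigmaFinite μ :=
    sigmaFinite_of_isCompact_lt_top (isSigmaCompact_iff_sigmaCompactSpace.2 inferInstance) hμ hμΩ
  let O : Opens (En n) := ⟨Ω, hΩ⟩
  have hO (φ : 𝓓(O, ℝ)) : SmoothTest Ω φ := ⟨φ.contDiff, φ.hasCompactSupport, φ.tsupport_subset⟩
  have integral_eq (φ : 𝓓(O, ℝ)) (j : Fin m) (i : Fin n) :
      ∫ x in Ω, f x j * fderiv ℝ φ x (EuclideanSpace.single i 1)
        = ∫ x in Ω, lineDeriv ℝ φ x (EuclideanSpace.single i 1) * f x j := by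
    congr 1 with x
    rw [mul_comm, ((φ.contDiff.differentiable (by simp)) x).lineDeriv_eq_fderiv]
  have h_density (j : Fin m) (i : Fin n) := exists_abs_le_integral_lineDeriv_mul_eq_neg
    (Ω := O) (ν := volume.restrict Ω) (μ := μ) (u := fun x => f x j)
    (((EuclideanSpace.proj (𝕜 := ℝ) j).locallyIntegrableOn_comp hf).mono_measure
      Measure.restrict_le_self) (EuclideanSpace.single i 1) hM
    (fun φ => integrable_of_hasCompactSupport_of_isCompact_lt_top φ.continuous φ.hasCompactSupport
      (hμ _ φ.hasCompactSupport φ.tsupport_subset))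
    (fun φ => integral_eq φ j i ▸ h φ (hO φ) j i)
  choose σ hσ hσM hσ_parts using h_density
  have hσ_frob (x : En n) : frobNorm (fun j i => σ j i x) ≤ √(m * n) * M :=
    frobNorm_le hM fun j i => hσM j i x
  refine ⟨_, memBVloc_withDensity_frobNorm hf hμΩ hμ (σ := fun x j i => σ j i x) (by fun_prop)
    hσ_frob fun φ hφ j i => ?_, ?_⟩
  · let ψ : 𝓓(O, ℝ) := ⟨φ, hφ.1, hφ.2.1, hφ.2.2⟩
    exact (integral_eq ψ j i).trans (hσ_parts j i ψ)
  · exact (withDensity_mono (ae_of_all _ fun x => ENNReal.ofReal_le_ofReal (hσ_frob x))).trans_eq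
      (withDensity_const _)

end BVCriterion

section GridEstimate

variable {n : ℕ}

theorem norm_le_sqrt_mul_of_forall_abs_le {x : En n} {b : ℝ} (hb : 0 ≤ b) (hx : ∀ l, |x l| ≤ b) :
    ‖x‖ ≤ √n * b := by
  rw [EuclideanSpace.norm_eq, Real.sqrt_le_left (by positivity), mul_pow,
    Real.sq_sqrt n.cast_nonneg]
  calc ∑ l, ‖x l‖ ^ 2 ≤ ∑ _l : Fin n, b ^ 2 := by gcongr with l; exact hx l
    _ = n * b ^ 2 := by simp only [Finset.sum_const, Finset.card_univ, Fintype.card_fin,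
        nsmul_eq_mul]

/-- The index `k` of the cube `∏ l, [k l * δ, (k l + 1) * δ)` containing `y`, in the grid of
mesh `δ`. -/
def gridIndex (δ : ℝ) (y : En n) : Fin n → ℤ := fun l => ⌊y l / δ⌋

theorem measurable_gridIndex (δ : ℝ) : Measurable (gridIndex δ : En n → Fin n → ℤ) := by
  unfold gridIndex
  fun_prop

theorem apply_mem_Ico_of_gridIndex {δ : ℝ} (hδ : 0 < δ) (y : En n) (l : Fin n) :
    y l ∈ Ico (gridIndex δ y l * δ) ((gridIndex δ y l + 1) * δ) :=
  ⟨(le_div_iff₀ hδ).1 (Int.floor_le _), (div_lt_iff₀ hδ).1 (Int.lt_floor_add_one _)⟩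

theorem dist_le_of_gridIndex_eq {δ : ℝ} (hδ : 0 < δ) {y z : En n}
    (h : gridIndex δ y = gridIndex δ z) : dist y z ≤ √n * δ := by
  rw [dist_eq_norm]
  refine norm_le_sqrt_mul_of_forall_abs_le hδ.le fun l => ?_
  have hy := apply_mem_Ico_of_gridIndex hδ y l
  have hz := apply_mem_Ico_of_gridIndex hδ z l
  rw [h] at hy
  rw [PiLp.sub_apply, abs_le]
  constructor <;> linarith [hy.1, hy.2, hz.1, hz.2]

theorem volume_gridIndex_preimage_singleton {δ : ℝ} (hδ : 0 < δ) (k : Fin n → ℤ) :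
    volume (gridIndex δ ⁻¹' {k} : Set (En n)) = ENNReal.ofReal δ ^ n := by
  have h_cube : (gridIndex δ ⁻¹' {k} : Set (En n))
      = WithLp.ofLp ⁻¹' univ.pi fun l => Ico (k l * δ) ((k l + 1) * δ) := by
    ext y
    simp only [mem_preimage, mem_singleton_iff, funext_iff, gridIndex, Int.floor_eq_iff,
      le_div_iff₀ hδ, div_lt_iff₀ hδ, mem_univ_pi, mem_Ico]
  rw [h_cube, (PiLp.volume_preserving_ofLp _).measure_preimage
    (MeasurableSet.univ_pi fun _ => measurableSet_Ico).nullMeasurableSet, volume_pi_pi]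
  simp only [Real.volume_Ico, add_mul, one_mul, add_sub_cancel_left, Finset.prod_const,
    Finset.card_univ, Fintype.card_fin]

/-- The union of the cubes of half-side `a` centred on the segment from `c` to `c - t • eᵢ`. -/
def sweptBox (i : Fin n) (a t : ℝ) (c : En n) : Set (En n) :=
  WithLp.ofLp ⁻¹' univ.pi fun l => Icc (c l - a - (Pi.single i t : Fin n → ℝ) l) (c l + a)

theorem mem_sweptBox {i : Fin n} {a t : ℝ} {x c : En n} : x ∈ sweptBox i a t c ↔
    ∀ l, x l ∈ Icc (c l - a - (Pi.single i t : Fin n → ℝ) l) (c l + a) :=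
  mem_univ_pi

theorem measurableSet_sweptBox (i : Fin n) (a t : ℝ) (c : En n) :
    MeasurableSet (sweptBox i a t c) :=
  (PiLp.volume_preserving_ofLp _).measurable
    (MeasurableSet.univ_pi fun _ => measurableSet_Icc)

theorem volume_sweptBox (i : Fin n) (a t : ℝ) (c : En n) :
    volume (sweptBox i a t c) = ENNReal.ofReal (2 * a) ^ (n - 1) * ENNReal.ofReal (t + 2 * a) := by
  rw [sweptBox, (PiLp.volume_preserving_ofLp _).measure_preimage
    (MeasurableSet.univ_pi fun _ => measurableSet_Icc).nullMeasurableSet, volume_pi_pi,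
    ← Finset.prod_erase_mul _ _ (Finset.mem_univ i)]
  congr 1
  · have h_side : ∀ l ∈ Finset.univ.erase i,
        volume (Icc (c l - a - (Pi.single i t : Fin n → ℝ) l) (c l + a))
          = ENNReal.ofReal (2 * a) := by
      intro l hl
      rw [Pi.single_eq_of_ne (Finset.ne_of_mem_erase hl), Real.volume_Icc]
      ring_nf
    rw [Finset.prod_eq_pow_card h_side, Finset.card_erase_of_mem (Finset.mem_univ i),
      Finset.card_univ, Fintype.card_fin]
  · rw [Pi.single_eq_same, Real.volume_Icc]
    ring_nf

theorem mem_sweptBox_of_dist_le {i : Fin n} {a t s : ℝ} (hs : s ∈ Icc 0 t) {x c : En n}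
    (h : dist (x + s • EuclideanSpace.single i 1) c ≤ a) : x ∈ sweptBox i a t c := by
  rw [dist_eq_norm] at h
  refine mem_sweptBox.2 fun l => ?_
  have hl := abs_le.1 ((PiLp.norm_apply_le _ l).trans h)
  obtain rfl | hli := eq_or_ne l i
  · simp only [PiLp.sub_apply, PiLp.add_apply, PiLp.smul_apply, PiLp.single_apply, if_true,
      smul_eq_mul, mul_one] at hl
    rw [Pi.single_eq_same]
    constructor <;> linarith [hl.1, hl.2, hs.1, hs.2]
  · simp only [PiLp.sub_apply, PiLp.add_apply, PiLp.smul_apply, PiLp.single_apply, if_neg hli,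
      smul_zero, add_zero] at hl
    rw [Pi.single_eq_of_ne hli]
    constructor <;> linarith [hl.1, hl.2]

theorem dist_le_of_mem_sweptBox {i : Fin n} {a t : ℝ} (ha : 0 ≤ a) (ht : 0 ≤ t) {x c : En n}
    (hx : x ∈ sweptBox i a t c) : dist x c ≤ √n * (t + a) := by
  rw [dist_eq_norm]
  refine norm_le_sqrt_mul_of_forall_abs_le (by positivity) fun l => ?_
  have hl := mem_sweptBox.1 hx l
  have h_single : (Pi.single i t : Fin n → ℝ) l ≤ t := by
    obtain rfl | hli := eq_or_ne l i
    · rw [Pi.single_eq_same]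
    · rwa [Pi.single_eq_of_ne hli]
  rw [PiLp.sub_apply, abs_le]
  constructor <;> linarith [hl.1, hl.2]

theorem enorm_sub_apply_le_tsum_gridIndex {γ : ℝ → En n} {r t : ℝ} (hγ : ContinuousOn γ (uIcc r t))
    {δ : ℝ} (hδ : 0 < δ) (j : Fin n) :
    ‖γ t j - γ r j‖ₑ ≤ ∑' _ : (gridIndex δ ∘ γ) '' uIcc r t, ENNReal.ofReal δ := by
  set S := (gridIndex δ ∘ γ) '' uIcc r t
  have hγj : ContinuousOn (fun s => γ s j) (uIcc r t) :=
    (EuclideanSpace.proj (𝕜 := ℝ) j).continuous.comp_continuousOn hγ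
  have h_cover : uIcc (γ r j) (γ t j) ⊆ ⋃ k : S, Ico (k.1 j * δ) ((k.1 j + 1) * δ) := by
    intro z hz
    obtain ⟨s, hs, rfl⟩ := intermediate_value_uIcc hγj hz
    exact mem_iUnion.2 ⟨⟨_, s, hs, rfl⟩, apply_mem_Ico_of_gridIndex hδ (γ s) j⟩
  calc ‖γ t j - γ r j‖ₑ = volume (uIcc (γ r j) (γ t j)) := by
        rw [Real.volume_interval, Real.enorm_eq_ofReal_abs]
    _ ≤ ∑' k : S, volume (Ico (k.1 j * δ) ((k.1 j + 1) * δ)) :=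
        (measure_mono h_cover).trans (measure_iUnion_le _)
    _ = ∑' _ : S, ENNReal.ofReal δ := by
        simp only [Real.volume_Ico, add_mul, one_mul, add_sub_cancel_left]

theorem measure_mul_setLIntegral_le {X Y : Type*} [MeasurableSpace X] [MeasurableSpace Y]
    {μ : Measure X} {ν : Measure Y} {A : Set X} {B : Set Y} (hA : MeasurableSet A)
    (hB : MeasurableSet B) {F : X → ℝ≥0∞} {G : Y → ℝ≥0∞} (h : ∀ x ∈ A, ∀ y ∈ B, F x ≤ G y) :
    ν B * ∫⁻ x in A, F x ∂μ ≤ μ A * ∫⁻ y in B, G y ∂ν := by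
  calc ν B * ∫⁻ x in A, F x ∂μ ≤ ν B * ∫⁻ _ in A, ⨆ x ∈ A, F x ∂μ := by
        gcongr 1
        exact setLIntegral_mono' hA fun x hx => le_iSup₂ (f := fun x (_ : x ∈ A) => F x) x hx
    _ = μ A * ∫⁻ _ in B, ⨆ x ∈ A, F x ∂ν := by
        rw [setLIntegral_const, setLIntegral_const]
        ring
    _ ≤ μ A * ∫⁻ y in B, G y ∂ν := by
        gcongr 1
        exact setLIntegral_mono' hB fun y hy => iSup₂_le fun x hx => h x hx y hy

variable {f g : En n → En n} {K₀ W : Set (En n)} {L : ℝ≥0} {δ t : ℝ}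

theorem dist_le_of_gridIndex_comp_eq (hg : LipschitzOnWith L g W) (hfW : MapsTo f K₀ W)
    (hgf : LeftInvOn g f K₀) (hδ : 0 < δ) {x y : En n} (hx : x ∈ K₀) (hy : y ∈ W)
    (h : gridIndex δ (f x) = gridIndex δ y) : dist x (g y) ≤ L * (√n * δ) :=
  calc dist x (g y) = dist (g (f x)) (g y) := by rw [hgf hx]
    _ ≤ L * dist (f x) y := hg.dist_le_mul _ (hfW hx) _ hy
    _ ≤ L * (√n * δ) := by
        gcongr
        exact dist_le_of_gridIndex_eq hδ h

theorem enorm_translate_sub_le_tsum_sweptBox (hf : ContinuousOn f K₀)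
    (hg : LipschitzOnWith L g W) (hfW : MapsTo f K₀ W) (hgf : LeftInvOn g f K₀) (hδ : 0 < δ)
    (ht : 0 ≤ t) {c : (gridIndex δ ∘ f) '' K₀ → En n} (hcK : ∀ k, c k ∈ K₀)
    (hc : ∀ k, gridIndex δ (f (c k)) = k) {i : Fin n} {x : En n}
    (hx : ∀ s ∈ Icc 0 t, x + s • EuclideanSpace.single i 1 ∈ K₀) (j : Fin n) :
    ‖f (x + t • EuclideanSpace.single i 1) j - f x j‖ₑ ≤
      ∑' k, (sweptBox i (L * (√n * δ)) t (c k)).indicator (fun _ => ENNReal.ofReal δ) x := by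
  let γ : ℝ → En n := fun s => f (x + s • EuclideanSpace.single i 1)
  have hγ : ContinuousOn γ (uIcc 0 t) := by
    rw [uIcc_of_le ht]
    exact hf.comp (by fun_prop) hx
  have h_visited (k : (gridIndex δ ∘ γ) '' uIcc 0 t) :
      ∃ hk : k.1 ∈ (gridIndex δ ∘ f) '' K₀, x ∈ sweptBox i (L * (√n * δ)) t (c ⟨k, hk⟩) := by
    obtain ⟨_, s, hs, rfl⟩ := k
    rw [uIcc_of_le ht] at hs
    let k' : (gridIndex δ ∘ f) '' K₀ := ⟨_, _, hx s hs, rfl⟩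
    have h_dist : dist (x + s • EuclideanSpace.single i 1) (c k') ≤ L * (√n * δ) := by
      rw [← hgf (hcK k')]
      exact dist_le_of_gridIndex_comp_eq hg hfW hgf hδ (hx s hs) (hfW (hcK k')) (hc k').symm
    exact ⟨k'.2, mem_sweptBox_of_dist_le hs h_dist⟩
  choose h_mem hx_mem using h_visited
  calc ‖f (x + t • EuclideanSpace.single i 1) j - f x j‖ₑ = ‖γ t j - γ 0 j‖ₑ := by
        simp only [γ, zero_smul, add_zero]
    _ ≤ ∑' _ : (gridIndex δ ∘ γ) '' uIcc 0 t, ENNReal.ofReal δ :=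
        enorm_sub_apply_le_tsum_gridIndex hγ hδ j
    _ = ∑' k : ↥((gridIndex δ ∘ γ) '' uIcc 0 t),
          (sweptBox i (L * (√n * δ)) t (c ⟨k.1, h_mem k⟩)).indicator
            (fun _ => ENNReal.ofReal δ) x := by
        simp only [indicator_of_mem (hx_mem _)]
    _ ≤ _ := ENNReal.tsum_comp_le_tsum_of_injective
        (f := fun k => (⟨k.1, h_mem k⟩ : (gridIndex δ ∘ f) '' K₀))
        (fun k l hkl => Subtype.ext (Subtype.mk.inj hkl))
        fun k => (sweptBox i (L * (√n * δ)) t (c k)).indicator (fun _ => ENNReal.ofReal δ) x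

theorem ofReal_mul_setLIntegral_sweptBox_le (hδ : 0 < δ) (i : Fin n) (a t : ℝ)
    (c : En n) (k : Fin n → ℤ) {F G : En n → ℝ≥0∞}
    (hFG : ∀ x ∈ sweptBox i (a * δ) t c, ∀ y ∈ gridIndex δ ⁻¹' {k}, F x ≤ G y) :
    ENNReal.ofReal δ * ∫⁻ x in sweptBox i (a * δ) t c, F x ≤
      ENNReal.ofReal (2 * a) ^ (n - 1) * ENNReal.ofReal (t + 2 * (a * δ)) *
        ∫⁻ y in gridIndex δ ⁻¹' {k}, G y := by
  have hn : n - 1 + 1 = n := Nat.sub_add_cancel i.pos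
  have hδ' : ENNReal.ofReal δ ^ (n - 1) ≠ 0 := by simpa using fun h => (hδ.not_ge h).elim
  have h := measure_mul_setLIntegral_le (μ := volume) (ν := volume)
    (measurableSet_sweptBox i (a * δ) t c) (measurable_gridIndex δ (measurableSet_singleton k)) hFG
  rw [volume_gridIndex_preimage_singleton hδ, volume_sweptBox] at h
  rw [← ENNReal.mul_le_mul_iff_right hδ' (by finiteness)]
  calc ENNReal.ofReal δ ^ (n - 1) * (ENNReal.ofReal δ * ∫⁻ x in sweptBox i (a * δ) t c, F x)
      = ENNReal.ofReal δ ^ n * ∫⁻ x in sweptBox i (a * δ) t c, F x := by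
        rw [← mul_assoc, ← pow_succ, hn]
    _ ≤ _ := h
    _ = _ := by
        rw [← mul_assoc, ENNReal.ofReal_mul' hδ.le, mul_pow]
        ring

theorem setLIntegral_mul_enorm_translate_sub_le (hf : ContinuousOn f K₀)
    (hg : LipschitzOnWith L g W) (hgf : LeftInvOn g f K₀) (hδ : 0 < δ) (ht : 0 ≤ t)
    (hW : ∀ x ∈ K₀, gridIndex δ ⁻¹' {gridIndex δ (f x)} ⊆ W) {K : Set (En n)}
    (hK : MeasurableSet K) {i : Fin n}
    (hKK₀ : ∀ x ∈ K, ∀ s ∈ Icc 0 t, x + s • EuclideanSpace.single i 1 ∈ K₀) (j : Fin n)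
    {F G : En n → ℝ≥0∞} (hF : Measurable F)
    (hFG : ∀ x, ∀ y ∈ W, dist x (g y) ≤ √n * (t + L * √n * δ) + L * √n * δ → F x ≤ G y) :
    ∫⁻ x in K, F x * ‖f (x + t • EuclideanSpace.single i 1) j - f x j‖ₑ ≤
      ENNReal.ofReal (2 * (L * √n)) ^ (n - 1) * ENNReal.ofReal (t + 2 * (L * √n * δ)) *
        ∫⁻ y in W, G y := by
  have hfW : MapsTo f K₀ W := fun x hx => hW x hx rfl
  let S := (gridIndex δ ∘ f) '' K₀
  choose c hcK hc using fun k : S => k.2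
  let B (k : S) : Set (En n) := sweptBox i (L * √n * δ) t (c k)
  let Q (k : S) : Set (En n) := gridIndex δ ⁻¹' {k.1}
  have hB (k : S) : MeasurableSet (B k) := measurableSet_sweptBox i _ t (c k)
  have hQ (k : S) : MeasurableSet (Q k) := measurable_gridIndex δ (measurableSet_singleton k.1)
  have hQW (k : S) : Q k ⊆ W := by
    simpa only [Q, ← hc k, Function.comp_apply] using hW (c k) (hcK k)
  have h_cell (k : S) : ENNReal.ofReal δ * ∫⁻ x in B k, F x ≤
      ENNReal.ofReal (2 * (L * √n)) ^ (n - 1) * ENNReal.ofReal (t + 2 * (L * √n * δ)) *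
        ∫⁻ y in Q k, G y := by
    refine ofReal_mul_setLIntegral_sweptBox_le hδ i _ t (c k) k fun x hx y hy => ?_
    refine hFG x y (hQW k hy) ((dist_triangle _ (c k) _).trans (add_le_add ?_ ?_))
    · exact dist_le_of_mem_sweptBox (by positivity) ht hx
    · rw [mul_assoc]
      exact dist_le_of_gridIndex_comp_eq hg hfW hgf hδ (hcK k) (hQW k hy) ((hc k).trans hy.symm)
  calc ∫⁻ x in K, F x * ‖f (x + t • EuclideanSpace.single i 1) j - f x j‖ₑ
      ≤ ∫⁻ x in K, F x * ∑' k, (B k).indicator (fun _ => ENNReal.ofReal δ) x := by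
        refine setLIntegral_mono' hK fun x hx => ?_
        gcongr
        simp only [B, mul_assoc]
        exact enorm_translate_sub_le_tsum_sweptBox hf hg hfW hgf hδ ht hcK hc (hKK₀ x hx) j
    _ ≤ ∫⁻ x, ∑' k, (B k).indicator (fun x => ENNReal.ofReal δ * F x) x := by
        refine (setLIntegral_le_lintegral _ _).trans_eq (lintegral_congr fun x => ?_)
        rw [← ENNReal.tsum_mul_left]
        simp only [mul_comm (F x), indicator_mul_left]
    _ = ∑' k, ENNReal.ofReal δ * ∫⁻ x in B k, F x := by
        rw [lintegral_tsum fun k => ((hF.const_mul _).indicator (hB k)).aemeasurable]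
        simp only [lintegral_indicator (hB _), lintegral_const_mul _ hF]
    _ ≤ _ := ENNReal.tsum_le_tsum h_cell
    _ = ENNReal.ofReal (2 * (L * √n)) ^ (n - 1) * ENNReal.ofReal (t + 2 * (L * √n * δ)) *
          ∫⁻ y in ⋃ k, Q k, G y := by
        rw [ENNReal.tsum_mul_left, lintegral_iUnion hQ]
        exact fun k l hkl => disjoint_left.2 fun y hyk hyl =>
          hkl (Subtype.ext (hyk.symm.trans hyl))
    _ ≤ _ := by
        gcongr
        exact iUnion_subset hQW

end GridEstimate

section DifferenceQuotient

theorem enorm_le_enorm_add_of_lipschitzWith {X : Type*} [PseudoMetricSpace X] {C : ℝ≥0}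
    {φ : X → ℝ} (hφ : LipschitzWith C φ) {x y : X} {d : ℝ} (hd : dist x y ≤ d) :
    ‖φ x‖ₑ ≤ ‖φ y‖ₑ + ENNReal.ofReal (C * d) := by
  have h_dist : ‖φ x - φ y‖ₑ ≤ ENNReal.ofReal (C * d) := by
    rw [← edist_eq_enorm_sub, edist_dist]
    exact ENNReal.ofReal_le_ofReal ((hφ.dist_le_mul x y).trans (by gcongr))
  calc ‖φ x‖ₑ = ‖φ y + (φ x - φ y)‖ₑ := by rw [add_sub_cancel]
    _ ≤ ‖φ y‖ₑ + ENNReal.ofReal (C * d) := (enorm_add_le _ _).trans (by gcongr)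

theorem setIntegral_mul_fderiv_eq_integral_indicator_mul_lineDeriv {E : Type*}
    [NormedAddCommGroup E] [NormedSpace ℝ E] [MeasurableSpace E] {μ : Measure E} {φ u : E → ℝ}
    (hφ : Differentiable ℝ φ) {S T : Set E} (hS : tsupport φ ⊆ S) (hT : tsupport φ ⊆ T) (v : E) :
    ∫ x in S, u x * fderiv ℝ φ x v ∂μ = ∫ x, T.indicator u x * lineDeriv ℝ φ x v ∂μ := by
  have h_zero {x : E} (hx : x ∉ tsupport φ) : fderiv ℝ φ x = 0 :=
    image_eq_zero_of_notMem_tsupport fun hx' => hx (tsupport_fderiv_subset ℝ hx')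
  rw [setIntegral_eq_integral_of_forall_compl_eq_zero fun x hx => by
    rw [h_zero fun hx' => hx (hS hx'), zero_apply, mul_zero]]
  refine integral_congr_ae (ae_of_all _ fun x => ?_)
  dsimp only
  rw [(hφ x).lineDeriv_eq_fderiv]
  by_cases hx : x ∈ tsupport φ
  · rw [indicator_of_mem (hT hx)]
  · rw [h_zero hx, zero_apply, mul_zero, mul_zero]

variable {E : Type*} [NormedAddCommGroup E] [MeasurableSpace E] [BorelSpace E]
  {μ : Measure E} {C : ℝ≥0} {φ u : E → ℝ}

theorem integral_translate_sub_mul_eq [μ.IsAddRightInvariant] (hφ : Continuous φ)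
    (hφc : HasCompactSupport φ) (hu : Integrable u μ) (v : E) :
    ∫ x, (φ (x - v) - φ x) * u x ∂μ = ∫ x, φ x * (u (x + v) - u x) ∂μ := by
  obtain ⟨M, hM⟩ := hφ.bounded_above_of_compact_support hφc
  have h_mul {w : E → ℝ} (hw : Integrable w μ) : Integrable (fun x => φ x * w x) μ :=
    hw.bdd_mul hφ.aestronglyMeasurable (ae_of_all _ hM)
  have h_translate : Integrable (fun x => φ (x - v) * u x) μ :=
    hu.bdd_mul (hφ.comp (continuous_sub_right v)).aestronglyMeasurable
      (ae_of_all _ fun x => hM (x - v))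
  simp only [sub_mul, mul_sub]
  rw [integral_sub h_translate (h_mul hu), integral_sub (h_mul (hu.comp_add_right v)) (h_mul hu),
    ← integral_add_right_eq_self (fun x => φ (x - v) * u x) v]
  simp only [add_sub_cancel_right]

theorem enorm_integral_mul_lineDeriv_le_of_tendsto [NormedSpace ℝ E] [FiniteDimensional ℝ E]
    [μ.IsAddHaarMeasure] (hφ : LipschitzWith C φ) (hφc : HasCompactSupport φ)
    (hu : Integrable u μ) {v : E}
    {b : ℝ → ℝ≥0∞} {B : ℝ≥0∞} (hb : Tendsto b (𝓝[>] 0) (𝓝 B))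
    (h : ∀ᶠ t in 𝓝[>] 0,
      ∫⁻ x, ‖φ x‖ₑ * ‖u (x + t • v) - u x‖ₑ ∂μ ≤ ENNReal.ofReal t * b t) :
    ‖∫ x, u x * lineDeriv ℝ φ x v ∂μ‖ₑ ≤ B := by
  have h_lim := hφ.integral_inv_smul_sub_mul_tendsto_integral_lineDeriv_mul hu (-v)
  simp only [lineDeriv_neg, neg_mul, integral_neg, mul_comm (lineDeriv ℝ φ _ v)] at h_lim
  rw [← enorm_neg]
  refine le_of_tendsto_of_tendsto h_lim.enorm hb ?_
  filter_upwards [h, self_mem_nhdsWithin] with t ht (ht_pos : 0 < t)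
  calc ‖∫ x, t⁻¹ • (φ (x + t • -v) - φ x) * u x ∂μ‖ₑ
      = ‖t⁻¹ * ∫ x, φ x * (u (x + t • v) - u x) ∂μ‖ₑ := by
        simp only [smul_mul_assoc, smul_neg, ← sub_eq_add_neg]
        rw [integral_smul, integral_translate_sub_mul_eq hφ.continuous hφc hu, smul_eq_mul]
    _ ≤ (ENNReal.ofReal t)⁻¹ * ∫⁻ x, ‖φ x‖ₑ * ‖u (x + t • v) - u x‖ₑ ∂μ := by
        rw [enorm_mul, enorm_inv ht_pos.ne', Real.enorm_of_nonneg ht_pos.le]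
        gcongr
        simpa only [enorm_mul] using enorm_integral_le_lintegral_enorm
          fun x => φ x * (u (x + t • v) - u x)
    _ ≤ b t := by
        rwa [ENNReal.inv_mul_le_iff (ENNReal.ofReal_pos.2 ht_pos).ne' ENNReal.ofReal_ne_top]

end DifferenceQuotient

section VariationEstimate

variable {n : ℕ} {f g : En n → En n} {K₀ W : Set (En n)} {L Λ : ℝ≥0} {φ : En n → ℝ} {r ρ : ℝ}

-- The mesh is `t ^ 2`, so that the errors caused by the grid are `o(t)`.
theorem eventually_lintegral_mul_enorm_translate_sub_le (hφ : LipschitzWith Λ φ) (hr : 0 < r)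
    (hρ : 0 < ρ) (hK₀ : cthickening r (tsupport φ) ⊆ K₀) (hW : cthickening ρ (f '' K₀) ⊆ W)
    (hf : ContinuousOn f K₀) (hg : LipschitzOnWith L g W) (hgf : LeftInvOn g f K₀) (i j : Fin n) :
    ∀ᶠ t in 𝓝[>] 0,
      ∫⁻ x, ‖φ x‖ₑ * ‖K₀.indicator (fun x => f x j) (x + t • EuclideanSpace.single i 1) -
          K₀.indicator (fun x => f x j) x‖ₑ ≤
        ENNReal.ofReal t * (ENNReal.ofReal (2 * (L * √n)) ^ (n - 1) *
          (ENNReal.ofReal (1 + 2 * (L * √n * t)) * ∫⁻ y in W, (‖φ (g y)‖ₑ +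
            ENNReal.ofReal (Λ * (√n * (t + L * √n * t ^ 2) + L * √n * t ^ 2))))) := by
  have hρ_mesh : ∀ᶠ t : ℝ in 𝓝[>] 0, √n * t ^ 2 ≤ ρ := by
    have : Tendsto (fun t : ℝ => √n * t ^ 2) (𝓝[>] 0) (𝓝 0) :=
      tendsto_nhdsWithin_of_tendsto_nhds (Continuous.tendsto' (by fun_prop) 0 0 (by simp))
    exact this.eventually_le_const hρ
  filter_upwards [Ioc_mem_nhdsGT hr, hρ_mesh] with t ⟨ht, htr⟩ htρ
  have h_segment : ∀ x ∈ tsupport φ, ∀ s ∈ Icc 0 t, x + s • EuclideanSpace.single i 1 ∈ K₀ := by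
    refine fun x hx s hs => hK₀ (mem_cthickening_of_dist_le _ x r _ hx ?_)
    rw [dist_self_add_left, norm_smul, PiLp.norm_single, norm_one, mul_one,
      Real.norm_of_nonneg hs.1]
    exact hs.2.trans htr
  have h_cell : ∀ x ∈ K₀, gridIndex (t ^ 2) ⁻¹' {gridIndex (t ^ 2) (f x)} ⊆ W :=
    fun x hx y hy => hW <| mem_cthickening_of_dist_le y (f x) ρ _ (mem_image_of_mem f hx)
      ((dist_le_of_gridIndex_eq (by positivity) hy).trans htρ)
  calc _ = ∫⁻ x in tsupport φ, ‖φ x‖ₑ * ‖f (x + t • EuclideanSpace.single i 1) j - f x j‖ₑ := by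
        rw [← lintegral_indicator (isClosed_tsupport φ).measurableSet]
        refine lintegral_congr fun x => ?_
        by_cases hx : x ∈ tsupport φ
        · rw [indicator_of_mem hx, indicator_of_mem (h_segment x hx t ⟨ht.le, le_rfl⟩),
            indicator_of_mem (hK₀ (self_subset_cthickening _ hx))]
        · rw [indicator_of_notMem hx, image_eq_zero_of_notMem_tsupport hx, enorm_zero, zero_mul]
    _ ≤ _ := setLIntegral_mul_enorm_translate_sub_le hf hg hgf (sq_pos_of_pos ht) ht.le h_cell
        (isClosed_tsupport φ).measurableSet h_segment j hφ.continuous.measurable.enorm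
        fun x y _ hxy => enorm_le_enorm_add_of_lipschitzWith hφ hxy
    _ = _ := by
        rw [show t + 2 * (L * √n * t ^ 2) = t * (1 + 2 * (L * √n * t)) by ring,
          ENNReal.ofReal_mul ht.le]
        ring

theorem tendsto_ofReal_mul_setLIntegral_add_ofReal {ι X : Type*} [MeasurableSpace X]
    {μ : Measure X} {S : Set X} (hS : μ S ≠ ∞) (G : X → ℝ≥0∞) {l : Filter ι} {c η : ι → ℝ}
    (hc : Tendsto c l (𝓝 1)) (hη : Tendsto η l (𝓝 0)) :
    Tendsto (fun t => ENNReal.ofReal (c t) * ∫⁻ y in S, (G y + ENNReal.ofReal (η t)) ∂μ) l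
      (𝓝 (∫⁻ y in S, G y ∂μ)) := by
  have hc' : Tendsto (fun t => ENNReal.ofReal (c t)) l (𝓝 1) := by
    simpa only [ENNReal.ofReal_one] using ENNReal.tendsto_ofReal hc
  have hη' : Tendsto (fun t => ENNReal.ofReal (η t) * μ S) l (𝓝 0) := by
    simpa only [ENNReal.ofReal_zero, zero_mul] using
      ENNReal.Tendsto.mul_const (ENNReal.tendsto_ofReal hη) (.inr hS)
  simpa only [lintegral_add_right _ measurable_const, setLIntegral_const, add_zero, one_mul] using
    ENNReal.Tendsto.mul hc' (.inl one_ne_zero) (hη'.const_add (∫⁻ y in S, G y ∂μ))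
      (.inr ENNReal.one_ne_top)

theorem enorm_integral_indicator_mul_lineDeriv_le (hφ : LipschitzWith Λ φ)
    (hφc : HasCompactSupport φ) (hr : 0 < r) (hρ : 0 < ρ) (hK₀ : IsCompact K₀)
    (hφK₀ : cthickening r (tsupport φ) ⊆ K₀) (hf : ContinuousOn f K₀)
    (hg : LipschitzOnWith L g (cthickening ρ (f '' K₀))) (hgf : LeftInvOn g f K₀) (i j : Fin n) :
    ‖∫ x, K₀.indicator (fun x => f x j) x * lineDeriv ℝ φ x (EuclideanSpace.single i 1)‖ₑ ≤
      ENNReal.ofReal (2 * (L * √n)) ^ (n - 1) * ∫⁻ y in cthickening ρ (f '' K₀), ‖φ (g y)‖ₑ := by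
  have hW : volume (cthickening ρ (f '' K₀)) ≠ ∞ :=
    (hK₀.image_of_continuousOn hf).cthickening.measure_lt_top.ne
  have h_int : Integrable (K₀.indicator fun x => f x j) :=
    (integrable_indicator_iff hK₀.measurableSet).2
      (((EuclideanSpace.proj (𝕜 := ℝ) j).continuous.comp_continuousOn hf).integrableOn_compact hK₀)
  refine enorm_integral_mul_lineDeriv_le_of_tendsto hφ hφc h_int
    (ENNReal.Tendsto.const_mul (tendsto_ofReal_mul_setLIntegral_add_ofReal hW _ ?_ ?_)
      (.inr (by finiteness)))
    (eventually_lintegral_mul_enorm_translate_sub_le hφ hr hρ hφK₀ subset_rfl hf hg hgf i j)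
  · exact tendsto_nhdsWithin_of_tendsto_nhds (Continuous.tendsto' (by fun_prop) _ _ (by simp))
  · exact tendsto_nhdsWithin_of_tendsto_nhds (Continuous.tendsto' (by fun_prop) _ _ (by simp))

end VariationEstimate

namespace IsHomeoOn

variable {n : ℕ} {f g : En n → En n} {Ω₁ Ω₂ : Set (En n)} {μ : Measure (En n)}

theorem map_restrict_preimage_inter (h : IsHomeoOn f g Ω₁ Ω₂) (hΩ₁ : MeasurableSet Ω₁)
    (hΩ₂ : MeasurableSet Ω₂)
    {A : Set (En n)} (hAΩ₂ : A ⊆ Ω₂) (hA : MeasurableSet A) :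
    (μ.restrict Ω₂).map g (f ⁻¹' A ∩ Ω₁) = μ A := by
  obtain ⟨hf, hg, -, hg_maps, -, hfg⟩ := h
  have h_meas : MeasurableSet (f ⁻¹' A ∩ Ω₁) := by
    rw [inter_comm, ← Subtype.image_preimage_coe]
    exact hΩ₁.subtype_image (hf.domRestrict.measurable hA)
  have h_preimage : g ⁻¹' (f ⁻¹' A ∩ Ω₁) ∩ Ω₂ = A := by
    ext y
    refine ⟨fun hy => ?_, fun hy => ⟨⟨?_, hg_maps (hAΩ₂ hy)⟩, hAΩ₂ hy⟩⟩
    · exact hfg y hy.2 ▸ hy.1.1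
    · rwa [mem_preimage, hfg y (hAΩ₂ hy)]
  rw [Measure.map_apply_of_aemeasurable (hg.aemeasurable hΩ₂) h_meas,
    Measure.restrict_apply' hΩ₂, h_preimage]

theorem map_restrict_compl (h : IsHomeoOn f g Ω₁ Ω₂) (hΩ₁ : MeasurableSet Ω₁)
    (hΩ₂ : MeasurableSet Ω₂) :
    (μ.restrict Ω₂).map g Ω₁ᶜ = 0 := by
  rw [Measure.map_apply_of_aemeasurable (h.2.1.aemeasurable hΩ₂) hΩ₁.compl,
    Measure.restrict_apply' hΩ₂]
  convert measure_empty (μ := μ)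
  exact eq_empty_of_forall_notMem fun y hy => hy.1 (h.2.2.2.1 hy.2)

theorem map_restrict_lt_top_of_isCompact [IsFiniteMeasureOnCompacts μ]
    (h : IsHomeoOn f g Ω₁ Ω₂) (hΩ₁ : MeasurableSet Ω₁) (hΩ₂ : MeasurableSet Ω₂)
    {C : Set (En n)} (hC : IsCompact C) (hCΩ₁ : C ⊆ Ω₁) :
    (μ.restrict Ω₂).map g C < ∞ := by
  have hfC : IsCompact (f '' C) := hC.image_of_continuousOn (h.1.mono hCΩ₁)
  calc (μ.restrict Ω₂).map g C ≤ (μ.restrict Ω₂).map g (f ⁻¹' (f '' C) ∩ Ω₁) :=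
        measure_mono (subset_inter (subset_preimage_image f C) hCΩ₁)
    _ = μ (f '' C) := h.map_restrict_preimage_inter hΩ₁ hΩ₂
        (image_subset_iff.2 fun x hx => h.2.2.1 (hCΩ₁ hx)) hfC.measurableSet
    _ < ∞ := hfC.measure_lt_top

theorem abs_integral_mul_fderiv_le (h : IsHomeoOn f g Ω₁ Ω₂) (hΩ₁ : IsOpen Ω₁) (hΩ₂ : IsOpen Ω₂)
    {L : ℝ≥0} (hL : LipschitzOnWith L g Ω₂) {φ : En n → ℝ} (hφ : SmoothTest Ω₁ φ) (j i : Fin n) :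
    |∫ x in Ω₁, f x j * fderiv ℝ φ x (EuclideanSpace.single i 1)| ≤
      (2 * (L * √n)) ^ (n - 1) * ∫ x, |φ x| ∂((volume.restrict Ω₂).map g) := by
  obtain ⟨hφ_smooth, hφc, hφΩ₁⟩ := hφ
  obtain ⟨Λ, hΛ⟩ := hφ_smooth.lipschitzWith_of_hasCompactSupport hφc (by simp)
  obtain ⟨r, hr, hrΩ₁⟩ := hφc.exists_cthickening_subset_open hΩ₁ hφΩ₁
  set K₀ := cthickening r (tsupport φ)
  have hK₀ : IsCompact K₀ := IsCompact.cthickening hφc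
  have hfK₀ : ContinuousOn f K₀ := h.1.mono hrΩ₁
  obtain ⟨ρ, hρ, hρΩ₂⟩ := (hK₀.image_of_continuousOn hfK₀).exists_cthickening_subset_open hΩ₂
    (image_subset_iff.2 fun x hx => h.2.2.1 (hrΩ₁ hx))
  have h_int : Integrable φ ((volume.restrict Ω₂).map g) :=
    integrable_of_hasCompactSupport_of_isCompact_lt_top hΛ.continuous hφc
      (h.map_restrict_lt_top_of_isCompact hΩ₁.measurableSet hΩ₂.measurableSet hφc hφΩ₁)
  rw [← ENNReal.ofReal_le_ofReal_iff (by positivity), ← Real.enorm_eq_ofReal_abs,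
    setIntegral_mul_fderiv_eq_integral_indicator_mul_lineDeriv
      (hφ_smooth.differentiable (by simp)) hφΩ₁ (self_subset_cthickening _)]
  calc _ ≤ ENNReal.ofReal (2 * (L * √n)) ^ (n - 1) *
          ∫⁻ y in cthickening ρ (f '' K₀), ‖φ (g y)‖ₑ :=
        enorm_integral_indicator_mul_lineDeriv_le hΛ hφc hr hρ hK₀ subset_rfl hfK₀
          (hL.mono hρΩ₂) (fun x hx => h.2.2.2.2.1 x (hrΩ₁ hx)) i j
    _ ≤ ENNReal.ofReal (2 * (L * √n)) ^ (n - 1) * ∫⁻ y in Ω₂, ‖φ (g y)‖ₑ := by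
        gcongr
    _ = ENNReal.ofReal ((2 * (L * √n)) ^ (n - 1)) *
          ∫⁻ x, ‖φ x‖ₑ ∂((volume.restrict Ω₂).map g) := by
        rw [lintegral_map' hΛ.continuous.measurable.enorm.aemeasurable
          (h.2.1.aemeasurable hΩ₂.measurableSet), ENNReal.ofReal_pow (by positivity)]
    _ = _ := by
        rw [← ofReal_integral_norm_eq_lintegral_enorm h_int, ENNReal.ofReal_mul (by positivity)]
        rfl

end IsHomeoOn

/-- **Lemma (Statement 10).** There is a constant `C = C(n)` such that: if
`f : Ω₁ → Ω₂` is a homeomorphism whose inverse `g` is Lipschitz (with constant `L`),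
then `f ∈ BV_loc(Ω₁, Ω₂)` and `|Df|(f⁻¹(A)) ≤ C·L^{n-1}·Lⁿ(A)` for all Borel
`A ⊆ Ω₂`. -/
theorem bv_of_lipschitz_inverse (n : ℕ) :
    ∃ C : ℝ, 0 < C ∧
      ∀ (Ω₁ Ω₂ : Set (En n)), IsOpen Ω₁ → IsOpen Ω₂ →
        ∀ f g : En n → En n, IsHomeoOn f g Ω₁ Ω₂ →
          ∀ L : ℝ≥0, LipschitzOnWith L g Ω₂ →
            ∃ νf : Measure (En n), MemBVloc Ω₁ f νf ∧
              ∀ A : Set (En n), A ⊆ Ω₂ → MeasurableSet A →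
                νf (f ⁻¹' A ∩ Ω₁) ≤ ENNReal.ofReal (C * (L : ℝ) ^ (n - 1)) * volume A := by
  refine ⟨√(n * n) * (2 * √n) ^ (n - 1) + 1, by positivity, fun Ω₁ Ω₂ hΩ₁ hΩ₂ f g h L hL => ?_⟩
  obtain ⟨ν, hν, hν_le⟩ := exists_memBVloc_le_smul hΩ₁ (h.1.locallyIntegrableOn hΩ₁.measurableSet)
    (h.map_restrict_compl hΩ₁.measurableSet hΩ₂.measurableSet)
    (fun _ => h.map_restrict_lt_top_of_isCompact hΩ₁.measurableSet hΩ₂.measurableSet)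
    (by positivity) fun φ hφ => h.abs_integral_mul_fderiv_le hΩ₁ hΩ₂ hL hφ
  refine ⟨ν, hν, fun A hAΩ₂ hA => ?_⟩
  have h_const : √(n * n) * (2 * (L * √n)) ^ (n - 1) ≤
      (√(n * n) * (2 * √n) ^ (n - 1) + 1) * (L : ℝ) ^ (n - 1) := by
    rw [mul_left_comm 2, mul_pow, mul_left_comm, mul_comm]
    gcongr
    exact le_add_of_nonneg_right zero_le_one
  calc ν (f ⁻¹' A ∩ Ω₁)
      ≤ ENNReal.ofReal (√(n * n) * (2 * (L * √n)) ^ (n - 1)) *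
          (volume.restrict Ω₂).map g (f ⁻¹' A ∩ Ω₁) := hν_le _
    _ = ENNReal.ofReal (√(n * n) * (2 * (L * √n)) ^ (n - 1)) * volume A := by
        rw [h.map_restrict_preimage_inter hΩ₁.measurableSet hΩ₂.measurableSet hAΩ₂ hA]
    _ ≤ ENNReal.ofReal ((√(n * n) * (2 * √n) ^ (n - 1) + 1) * (L : ℝ) ^ (n - 1)) * volume A := by
        gcongr
end
end
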